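/- arXiv:1906.03315 — 3 statements merged into one kernel-verified Lean document; each statement's English description precedes it below -/
import Mathlib

section
/- Let k, r be nonnegative integers with k + r = n and let a = (k−1, k−1, …, k−1) be the constant sequence of length r. Then dim_ℚ V_n(a) ≥ k! · Stir(n,k), where Stir(n,k) is the Stirling number of the second kind counting k-block set partitions of {1,…,n}. In fact the set { ∂_1^{c_1} ⋯ ∂_n^{c_n} Δ_n(a) : (c_1,…,c_n) is (n,k)-substaircase } is linearly independent in V_n(a). -/
open MvPolynomial

/-- Superspace of rank `n`: elements are represented by their coefficients on the
basis of `θ`-monomials `θ_S` (for `S` a subset of `Fin n`, with factors in increasing order),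
with coefficients in the polynomial ring `ℚ[x_1, …, x_n]`. -/
abbrev Superspace (n : ℕ) := Finset (Fin n) → MvPolynomial (Fin n) ℚ

/-- The partial derivative `∂_i` with respect to the commuting variable `x_i`,
treating the `θ`-variables as constants. -/
noncomputable def xDeriv {n : ℕ} (i : Fin n) (F : Superspace n) : Superspace n :=
  fun S => MvPolynomial.pderiv i (F S)

/-- The partial derivative `∂_i^θ` with respect to the anticommuting variable `θ_i`:
it is `ℚ[x]`-linear and sends `θ_{j_1} ⋯ θ_{j_r}` (with `j_1 < ⋯ < j_r`) to
`(-1)^{s-1} θ_{j_1} ⋯ ω(θ_{j_s}) ⋯ θ_{j_r}` if `j_s = i`, and to `0` if `i` does not occur. -/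
noncomputable def thetaDeriv {n : ℕ} (i : Fin n) (F : Superspace n) : Superspace n :=
  fun S => if i ∈ S then 0
    else ((-1 : ℚ) ^ (S.filter (fun j => j < i)).card) • F (insert i S)

/-- The differential operator `∂(p)` (replace each `x_i` in `p` by `∂_i`) applied to `q`. -/
noncomputable def diffOp {n : ℕ} (p q : MvPolynomial (Fin n) ℚ) : MvPolynomial (Fin n) ℚ :=
  ∑ a ∈ p.support, ∑ b ∈ q.support,
    (p.coeff a * q.coeff b * ∏ i : Fin n, ((b i).descFactorial (a i) : ℚ)) •
      MvPolynomial.monomial (b - a) (1 : ℚ)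

/-- The action of the polynomial ring `ℚ[x_1, …, x_n]` on superspace, `f · g := ∂(f)(g)`. -/
noncomputable def pAct {n : ℕ} (p : MvPolynomial (Fin n) ℚ) (F : Superspace n) : Superspace n :=
  fun S => diffOp p (F S)

/-- Iterated `θ`-derivative along a list (leftmost applied last). -/
noncomputable def thetaDerivList {n : ℕ} (l : List (Fin n)) (F : Superspace n) : Superspace n :=
  l.foldr thetaDeriv F

/-- The action of superspace on itself, `f · g := ∂(f)(g)`, where `∂(f)` is obtained
from `f` by replacing every `x_i` by `∂_i` and every `θ_i` by `∂_i^θ`. -/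
noncomputable def superAct {n : ℕ} (f g : Superspace n) : Superspace n :=
  ∑ T : Finset (Fin n), (fun S => diffOp (f T) (thetaDerivList (T.sort (· ≤ ·)) g S))

/-- The diagonal action of a permutation `w` on superspace:
`w · x_i = x_{w(i)}` and `w · θ_i = θ_{w(i)}`. -/
noncomputable def permAct {n : ℕ} (w : Equiv.Perm (Fin n)) (F : Superspace n) : Superspace n :=
  fun S =>
    ((-1 : ℚ) ^ (((S.image w.symm) ×ˢ (S.image w.symm)).filter
        (fun p => p.1 < p.2 ∧ w p.2 < w p.1)).card) •
      MvPolynomial.rename w (F (S.image w.symm))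

/-- The supermonomial `x^a · θ_T`. -/
noncomputable def sMono {n : ℕ} (a : Fin n →₀ ℕ) (T : Finset (Fin n)) : Superspace n :=
  fun S => if S = T then MvPolynomial.monomial a (1 : ℚ) else 0

/-- The `a`-superspace Vandermonde
`Δ_n(a) = ε_n · (x_1^{a_1} ⋯ x_r^{a_r} x_{r+1}^{k-1} ⋯ x_n^0 · θ_1 ⋯ θ_r)` (with `n = k + r`). -/
noncomputable def superVandermonde (n r : ℕ) (a : Fin r → ℕ) : Superspace n :=
  ∑ w : Equiv.Perm (Fin n),
    ((Equiv.Perm.sign w : ℤ) : ℚ) •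
      permAct w (sMono
        (Finsupp.equivFunOnFinite.symm
          (fun i : Fin n => if h : (i : ℕ) < r then a ⟨(i : ℕ), h⟩ else n - 1 - (i : ℕ)))
        (Finset.univ.filter (fun i : Fin n => (i : ℕ) < r)))

/-- Multiplication in superspace (the `θ`-variables anticommute). -/
noncomputable def superMul {n : ℕ} (F G : Superspace n) : Superspace n :=
  fun S => ∑ T ∈ S.powerset,
    ((-1 : ℚ) ^ ((T ×ˢ (S \ T)).filter (fun p => p.2 < p.1)).card) • (F T * G (S \ T))

/-- The bilinear form `⟨f, g⟩` = constant term of `∂(f)(g)`. -/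
noncomputable def superPairing {n : ℕ} (f g : Superspace n) : ℚ :=
  MvPolynomial.constantCoeff (superAct f g ∅)

/-- `V_n(a)`: the smallest subspace of superspace containing `Δ_n(a)` which is closed
under the partial derivatives `∂_1, …, ∂_n`. -/
noncomputable def Vspace (n r : ℕ) (a : Fin r → ℕ) : Submodule ℚ (Superspace n) :=
  sInf {W : Submodule ℚ (Superspace n) |
    superVandermonde n r a ∈ W ∧ ∀ i : Fin n, ∀ F ∈ W, xDeriv i F ∈ W}

/-- `W_n(a)`: the smallest subspace of superspace containing `Δ_n(a)` which is closed
under `∂_1, …, ∂_n` and `∂_1^θ, …, ∂_n^θ`. -/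
noncomputable def Wspace (n r : ℕ) (a : Fin r → ℕ) : Submodule ℚ (Superspace n) :=
  sInf {W : Submodule ℚ (Superspace n) |
    superVandermonde n r a ∈ W ∧ (∀ i : Fin n, ∀ F ∈ W, xDeriv i F ∈ W) ∧
      (∀ i : Fin n, ∀ F ∈ W, thetaDeriv i F ∈ W)}

/-- A superpolynomial is `θ`-homogeneous of `θ`-degree `r`. -/
def isThetaHomog {n : ℕ} (r : ℕ) (F : Superspace n) : Prop :=
  ∀ S : Finset (Fin n), S.card ≠ r → F S = 0

/-- An `(n,k,s)`-staircase: a shuffle of `(s-1, …, s-1)` (`n-k` copies) with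
`(k-1, k-2, …, 1, 0)`; `T` records the positions of the decreasing staircase part. -/
def isStaircase3 (n k s : ℕ) (b : Fin n → ℕ) : Prop :=
  ∃ T : Finset (Fin n), T.card = k ∧
    ∀ i : Fin n, b i = if i ∈ T then k - 1 - (T.filter (fun j => j < i)).card else s - 1

/-- `(n,k,s)`-substaircase sequences: componentwise `≤` at least one `(n,k,s)`-staircase. -/
def isSubstaircase3 (n k s : ℕ) (c : Fin n → ℕ) : Prop :=
  ∃ b : Fin n → ℕ, isStaircase3 n k s b ∧ ∀ i, c i ≤ b i

/-- The (signless) Stirling numbers of the second kind. -/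
def stirling2 : ℕ → ℕ → ℕ
  | 0, 0 => 1
  | 0, _ + 1 => 0
  | _ + 1, 0 => 0
  | n + 1, k + 1 => stirling2 n k + (k + 1) * stirling2 n (k + 1)

/-- The ideal `I_{n,k,s} = ⟨x_1^s, …, x_n^s, e_n, e_{n-1}, …, e_{n-k+1}⟩`. -/
noncomputable def Inks (n k s : ℕ) : Ideal (MvPolynomial (Fin n) ℚ) :=
  Ideal.span ((Set.range fun i : Fin n => (MvPolynomial.X i : MvPolynomial (Fin n) ℚ) ^ s) ∪
    ((fun d => MvPolynomial.esymm (Fin n) ℚ d) '' {d : ℕ | n - k < d ∧ d ≤ n}))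

/-- The `q`-number `[m]_q = 1 + q + ⋯ + q^{m-1}`. -/
noncomputable def qNum (m : ℕ) : Polynomial ℕ := ∑ i ∈ Finset.range m, Polynomial.X ^ i

/-- The `q`-factorial `[k]!_q`. -/
noncomputable def qFactorial : ℕ → Polynomial ℕ
  | 0 => 1
  | m + 1 => qNum (m + 1) * qFactorial m

/-- The `q`-Stirling numbers `Stir_q(n,k)`. -/
noncomputable def qStirling : ℕ → ℕ → Polynomial ℕ
  | 0, 0 => 1
  | 0, _ + 1 => 0
  | _ + 1, 0 => 0
  | n + 1, k + 1 => qStirling n k + qNum (k + 1) * qStirling n (k + 1)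

/-- The submodule of superspace of `x`-homogeneous elements of `x`-degree `d`. -/
noncomputable def xHomogSub (n d : ℕ) : Submodule ℚ (Superspace n) :=
  Submodule.pi Set.univ
    (fun _ : Finset (Fin n) => MvPolynomial.homogeneousSubmodule (Fin n) ℚ d)

/-- The submodule of superspace of `θ`-homogeneous elements of `θ`-degree `j`. -/
noncomputable def thetaHomogSub (n j : ℕ) : Submodule ℚ (Superspace n) where
  carrier := {F | ∀ S : Finset (Fin n), S.card ≠ j → F S = 0}
  add_mem' := by
    intro F G hF hG S hS
    show F S + G S = 0
    rw [hF S hS, hG S hS, add_zero]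
  zero_mem' := by intro S _; rfl
  smul_mem' := by
    intro c F hF S hS
    show c • F S = 0
    rw [hF S hS, smul_zero]

/-- Coefficient formula for `∂^c q`. -/
theorem coeff_diffOp_monomial {n : ℕ} (c m : Fin n →₀ ℕ) (q : MvPolynomial (Fin n) ℚ) :
    (diffOp (monomial c (1 : ℚ)) q).coeff m =
      q.coeff (m + c) * ∏ i : Fin n, ((m i + c i).descFactorial (c i) : ℚ) := by
  classical
  unfold diffOp
  rw [support_monomial, if_neg one_ne_zero, Finset.sum_singleton, coeff_sum]
  rw [Finset.sum_eq_single (m + c)]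
  · simp [coeff_smul, coeff_monomial]
  · intro b _ hb
    rw [coeff_smul, coeff_monomial m (b - c)]
    split_ifs with h
    · have : ∃ i, b i < c i := by
        by_contra hcon
        push Not at hcon
        apply hb
        ext i
        have := hcon i
        have h2 : b i - c i = m i := DFunLike.congr_fun h i
        simp only [Finsupp.coe_add, Pi.add_apply]
        omega
      obtain ⟨i, hi⟩ := this
      have : ∏ i : Fin n, ((b i).descFactorial (c i) : ℚ) = 0 := by
        apply Finset.prod_eq_zero (Finset.mem_univ i)
        rw [Nat.descFactorial_eq_zero_iff_lt.mpr hi]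
        simp
      rw [this]
      simp
    · simp
  · intro h
    rw [notMem_support_iff] at h
    rw [h]
    simp

theorem diffOp_monomial_zero {n : ℕ} (q : MvPolynomial (Fin n) ℚ) :
    diffOp (monomial 0 (1 : ℚ)) q = q := by
  ext m
  rw [coeff_diffOp_monomial]
  simp

theorem diffOp_monomial_add_single {n : ℕ} (c : Fin n →₀ ℕ) (i : Fin n)
    (q : MvPolynomial (Fin n) ℚ) :
    diffOp (monomial (c + Finsupp.single i 1) (1 : ℚ)) q =
      pderiv i (diffOp (monomial c (1 : ℚ)) q) := by
  classical
  ext m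
  rw [coeff_diffOp_monomial, coeff_pderiv, coeff_diffOp_monomial]
  have h1 : m + (c + Finsupp.single i 1) = m + Finsupp.single i 1 + c := by
    rw [add_assoc, add_comm c]
  rw [h1, mul_assoc]
  congr 1
  rw [← Finset.mul_prod_erase _ _ (Finset.mem_univ i),
    ← Finset.mul_prod_erase _ _ (Finset.mem_univ i)]
  have h2 : ∀ j ∈ Finset.univ.erase i,
      (((m j + (c + Finsupp.single i 1 : Fin n →₀ ℕ) j).descFactorial ((c + Finsupp.single i 1 : Fin n →₀ ℕ) j) : ℕ) : ℚ) =
      (((m + Finsupp.single i 1 : Fin n →₀ ℕ) j + c j).descFactorial (c j) : ℕ) := by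
    intro j hj
    have : i ≠ j := fun h => by simp [h] at hj
    simp [Finsupp.single_apply, this]
  rw [Finset.prod_congr rfl h2]
  have h3 : ((m i + (c + Finsupp.single i 1 : Fin n →₀ ℕ) i).descFactorial ((c + Finsupp.single i 1 : Fin n →₀ ℕ) i) : ℕ) =
      ((m + Finsupp.single i 1 : Fin n →₀ ℕ) i + c i).descFactorial (c i) * (m i + 1) := by
    simp only [Finsupp.coe_add, Pi.add_apply, Finsupp.single_eq_same]
    rw [show m i + (c i + 1) = m i + 1 + c i by ring, Nat.descFactorial_succ, mul_comm]
    congr 1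
    omega
  rw [h3]
  push_cast
  ring

theorem pAct_mem_Vspace (n r : ℕ) (a : Fin r → ℕ) (c : Fin n →₀ ℕ) :
    pAct (monomial c (1 : ℚ)) (superVandermonde n r a) ∈ Vspace n r a := by
  rw [Vspace, Submodule.mem_sInf]
  rintro W ⟨h0, h1⟩
  have key : ∀ (N : ℕ) (c : Fin n →₀ ℕ), c.degree = N →
      pAct (monomial c (1 : ℚ)) (superVandermonde n r a) ∈ W := by
    intro N
    induction N with
    | zero =>
      intro c hc
      rw [Finsupp.degree_eq_zero_iff] at hc
      subst hc
      have : pAct (monomial 0 (1 : ℚ)) (superVandermonde n r a) = superVandermonde n r a := by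
        funext S
        exact diffOp_monomial_zero _
      rw [this]
      exact h0
    | succ N ih =>
      intro c hc
      have hne : c ≠ 0 := by rintro rfl; simp at hc
      obtain ⟨i, hi⟩ := Finsupp.ne_iff.mp hne
      have hle : Finsupp.single i 1 ≤ c := by
        rw [Finsupp.single_le_iff]
        exact Nat.one_le_iff_ne_zero.mpr hi
      have hsplit : c = (c - Finsupp.single i 1) + Finsupp.single i 1 :=
        (tsub_add_cancel_of_le hle).symm
      have hdeg : (c - Finsupp.single i 1).degree = N := by
        have h2 := congrArg Finsupp.degree hsplit
        rw [map_add, Finsupp.degree_single, hc] at h2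
        omega
      have := h1 i _ (ih _ hdeg)
      rw [hsplit]
      convert this using 1
      funext S
      exact diffOp_monomial_add_single _ _ _
  exact key _ c rfl

/-- Sign of a permutation by inversions. -/
theorem sign_eq_pow_inv {n : ℕ} (w : Equiv.Perm (Fin n)) :
    ((Equiv.Perm.sign w : ℤ) : ℚ) = (-1 : ℚ) ^
      ((Finset.univ : Finset (Fin n × Fin n)).filter
        (fun p => p.1 < p.2 ∧ w p.2 < w p.1)).card := by
  rw [Equiv.Perm.sign_eq_prod_prod_Ioi]
  have h : ∀ i : Fin n, Finset.Ioi i = Finset.univ.filter (fun j => i < j) := by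
    intro i; ext j; simp
  simp_rw [h, Finset.prod_filter]
  rw [← Finset.prod_product', Finset.univ_product_univ]
  push_cast
  rw [← Finset.prod_const, Finset.prod_filter]
  apply Finset.prod_congr rfl
  rintro ⟨i, j⟩ _
  rcases lt_trichotomy (w i) (w j) with hw | hw | hw
  · simp [hw, hw.not_gt]
  · have := w.injective hw
    simp [this]
  · simp [hw, hw.not_gt]
    split_ifs <;> simp

theorem sign_mul_inv {n r : ℕ} (w : Equiv.Perm (Fin n)) (S : Finset (Fin n))
    (R : Finset (Fin n)) (hR : R = Finset.univ.filter (fun i : Fin n => (i : ℕ) < r))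
    (hS : S.image w.symm = R) :
    ((Equiv.Perm.sign w : ℤ) : ℚ) *
      (-1 : ℚ) ^ ((R ×ˢ R).filter (fun p => p.1 < p.2 ∧ w p.2 < w p.1)).card =
    (-1 : ℚ) ^ (((S ×ˢ Rᶜ).filter (fun p => w p.2 < p.1)).card +
      ((Rᶜ ×ˢ Rᶜ).filter (fun p => p.1 < p.2 ∧ w p.2 < w p.1)).card) := by
  rw [sign_eq_pow_inv]
  set A := ((R ×ˢ R).filter (fun p : Fin n × Fin n => p.1 < p.2 ∧ w p.2 < w p.1)) with hA
  set B := ((R ×ˢ Rᶜ).filter (fun p : Fin n × Fin n => w p.2 < w p.1)) with hB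
  set C := ((Rᶜ ×ˢ Rᶜ).filter (fun p : Fin n × Fin n => p.1 < p.2 ∧ w p.2 < w p.1)) with hC
  have hU : ((Finset.univ : Finset (Fin n × Fin n)).filter
        (fun p => p.1 < p.2 ∧ w p.2 < w p.1)) = A ∪ (B ∪ C) := by
    ext ⟨i, j⟩
    simp only [hA, hB, hC, hR, Finset.mem_filter, Finset.mem_union, Finset.mem_product,
      Finset.mem_univ, true_and, Finset.mem_compl, Fin.lt_def]
    by_cases hP : ((w j : Fin n) : ℕ) < (w i : ℕ)
    · simp only [hP, and_true]; omega
    · simp [hP]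
  have hBC : Disjoint B C := by
    rw [Finset.disjoint_left]
    rintro ⟨i, j⟩ h1 h2
    simp only [hB, hC, Finset.mem_filter, Finset.mem_product, Finset.mem_compl] at h1 h2
    exact h2.1.1 h1.1.1
  have hABC : Disjoint A (B ∪ C) := by
    rw [Finset.disjoint_left]
    rintro ⟨i, j⟩ h1 h2
    simp only [hA, hB, hC, Finset.mem_filter, Finset.mem_product, Finset.mem_compl,
      Finset.mem_union] at h1 h2
    tauto
  have hBc : B.card = ((S ×ˢ Rᶜ).filter (fun p => w p.2 < p.1)).card := by
    apply Finset.card_bij (fun p _ => (w p.1, p.2))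
    · rintro ⟨i, j⟩ h
      simp only [hB, ← hS, Finset.mem_filter, Finset.mem_product, Finset.mem_image] at h ⊢
      obtain ⟨⟨⟨x, hx, rfl⟩, h2⟩, h3⟩ := h
      simp only [Equiv.apply_symm_apply] at h3 ⊢
      exact ⟨⟨hx, h2⟩, h3⟩
    · rintro ⟨i, j⟩ _ ⟨i', j'⟩ _ h
      simpa using h
    · rintro ⟨i, j⟩ h
      simp only [Finset.mem_filter, Finset.mem_product] at h
      refine ⟨(w.symm i, j), ?_, by simp⟩
      simp only [hB, Finset.mem_filter, Finset.mem_product, Equiv.apply_symm_apply]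
      exact ⟨⟨hS ▸ Finset.mem_image_of_mem _ h.1.1, h.1.2⟩, h.2⟩
  rw [hU, Finset.card_union_of_disjoint hABC, Finset.card_union_of_disjoint hBC, hBc, pow_add,
    mul_comm, ← mul_assoc, ← pow_add, ← two_mul, pow_mul]
  simp

/-- The exponent of the seed monomial. -/
noncomputable def baseExp (n k r : ℕ) : Fin n →₀ ℕ :=
  Finsupp.equivFunOnFinite.symm
    (fun i : Fin n => if _h : (i : ℕ) < r then k - 1 else n - 1 - (i : ℕ))

theorem coeff_superVandermonde (n k r : ℕ) (S : Finset (Fin n)) (m : Fin n →₀ ℕ) :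
    (superVandermonde n r (fun _ => k - 1) S).coeff m =
    ∑ w : Equiv.Perm (Fin n),
      if S.image w.symm = Finset.univ.filter (fun i : Fin n => (i : ℕ) < r) ∧
          ∀ i, m (w i) = baseExp n k r i then
        ((Equiv.Perm.sign w : ℤ) : ℚ) *
        (-1 : ℚ) ^ (((Finset.univ.filter (fun i : Fin n => (i : ℕ) < r)) ×ˢ
          (Finset.univ.filter (fun i : Fin n => (i : ℕ) < r))).filter
            (fun p => p.1 < p.2 ∧ w p.2 < w p.1)).card
      else 0 := by
  classical
  unfold superVandermonde
  rw [Finset.sum_apply, coeff_sum]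
  apply Finset.sum_congr rfl
  intro w _
  rw [Pi.smul_apply, coeff_smul, permAct, coeff_smul]
  change _ • _ • coeff m (rename w (sMono (baseExp n k r) _ _)) = _
  unfold sMono
  by_cases h : S.image w.symm = Finset.univ.filter (fun i : Fin n => (i : ℕ) < r)
  · rw [if_pos h, rename_monomial, coeff_monomial, h]
    have : (Finsupp.mapDomain w (baseExp n k r) = m) ↔ ∀ i, m (w i) = baseExp n k r i := by
      constructor
      · rintro rfl i
        rw [Finsupp.mapDomain_apply w.injective]
      · intro hh
        ext j
        obtain ⟨i, rfl⟩ := w.surjective j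
        rw [Finsupp.mapDomain_apply w.injective, hh]
    simp [this]
  · rw [if_neg h]
    simp [h]

theorem card_filter_lt_orderEmb {n k : ℕ} (T : Finset (Fin n)) (hT : T.card = k) (j : Fin k) :
    (T.filter (fun x => x < T.orderEmbOfFin hT j)).card = j := by
  have : T.filter (fun x => x < T.orderEmbOfFin hT j) =
      (Finset.Iio j).map (T.orderEmbOfFin hT).toEmbedding := by
    ext x
    simp only [Finset.mem_filter, Finset.mem_map, Finset.mem_Iio]
    constructor
    · rintro ⟨hx, hlt⟩
      have : x ∈ Set.range (T.orderEmbOfFin hT) := by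
        rw [Finset.range_orderEmbOfFin]; exact hx
      obtain ⟨i, rfl⟩ := this
      exact ⟨i, by simpa using hlt, rfl⟩
    · rintro ⟨i, hi, rfl⟩
      exact ⟨Finset.orderEmbOfFin_mem _ _ _, by simpa using hi⟩
  rw [this, Finset.card_map, Fin.card_Iio]

/-- If `x^m θ_{Tᶜ}` occurs in the Vandermonde then `m` is at most the staircase of `T`. -/
theorem lex_le_of_coeff_ne_zero {n k r : ℕ} (hn : k + r = n) (T : Finset (Fin n))
    (hT : T.card = k) (b : Fin n → ℕ)
    (hb : ∀ i : Fin n, b i = if i ∈ T then k - 1 - (T.filter (fun j => j < i)).card else k - 1)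
    (m : Fin n →₀ ℕ)
    (hm : (superVandermonde n r (fun _ => k - 1) Tᶜ).coeff m ≠ 0) (i : Fin n)
    (hlt : ∀ j < i, b j = m j) : m i ≤ b i := by
  classical
  rw [coeff_superVandermonde] at hm
  obtain ⟨w, _, hw⟩ := Finset.exists_ne_zero_of_sum_ne_zero hm
  rw [ite_ne_right_iff] at hw
  obtain ⟨⟨hS, hmw⟩, _⟩ := hw
  have hmem : ∀ i, w i ∈ T ↔ r ≤ (i : ℕ) := by
    intro i
    have h1 : i ∈ Tᶜ.image w.symm ↔ w i ∉ T := by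
      simp [Finset.mem_image, Equiv.symm_apply_eq]
    rw [hS] at h1
    simp only [Finset.mem_filter, Finset.mem_univ, true_and] at h1
    rw [← not_lt, h1, not_not]
  have hval : ∀ x, x ∈ T → m x = n - 1 - (w.symm x : ℕ) ∧ r ≤ (w.symm x : ℕ) := by
    intro x hx
    have h2 : r ≤ (w.symm x : ℕ) := by rw [← hmem]; simpa using hx
    have h1 := hmw (w.symm x)
    rw [Equiv.apply_symm_apply] at h1
    refine ⟨?_, h2⟩
    rw [h1]
    simp [baseExp, not_lt.mpr h2]
  by_cases hi : i ∈ T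
  · by_contra hcon
    push Not at hcon
    set t := (T.filter (fun j => j < i)).card with ht
    have hbi : b i = k - 1 - t := by rw [hb, if_pos hi]
    have hmi := hval i hi
    have hinj : Set.InjOn m (insert i (T.filter (fun j => j < i)) : Finset (Fin n)) := by
      intro x hx y hy hxy
      have hxT : x ∈ T := by
        simp only [Finset.coe_insert, Set.mem_insert_iff, Finset.mem_coe, Finset.mem_filter] at hx
        rcases hx with rfl | hx
        · exact hi
        · exact hx.1
      have hyT : y ∈ T := by
        simp only [Finset.coe_insert, Set.mem_insert_iff, Finset.mem_coe, Finset.mem_filter] at hy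
        rcases hy with rfl | hy
        · exact hi
        · exact hy.1
      have h1 := hval x hxT
      have h2 := hval y hyT
      apply w.symm.injective
      apply Fin.ext
      have := (w.symm x).isLt
      have := (w.symm y).isLt
      omega
    have hmaps : Set.MapsTo m (insert i (T.filter (fun j => j < i)) : Finset (Fin n))
        (Finset.Ico (k - t) k : Finset ℕ) := by
      intro x hx
      simp only [Finset.coe_insert, Set.mem_insert_iff, Finset.mem_coe, Finset.mem_filter] at hx
      simp only [Finset.mem_coe, Finset.mem_Ico]
      rcases hx with rfl | ⟨hx, hxi⟩
      · have := (w.symm x).isLt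
        omega
      · have h1 := hval x hx
        have h2 := hlt x hxi
        rw [hb, if_pos hx] at h2
        have h3 : (T.filter (fun j => j < x)).card < t := by
          apply Finset.card_lt_card
          rw [Finset.ssubset_iff_of_subset]
          · exact ⟨x, by simp [hx, hxi], by simp⟩
          · intro y hy
            simp only [Finset.mem_filter] at hy ⊢
            exact ⟨hy.1, hy.2.trans hxi⟩
        have := (w.symm x).isLt
        omega
    have hc := Finset.card_le_card_of_injOn m hmaps hinj
    rw [Finset.card_insert_of_notMem (by simp), Nat.card_Ico, ← ht] at hc
    omega
  · rw [hb, if_neg hi]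
    have h2 : (w.symm i : ℕ) < r := by
      by_contra h
      push Not at h
      rw [← hmem] at h
      exact hi (by simpa using h)
    have h1 := hmw (w.symm i)
    rw [Equiv.apply_symm_apply] at h1
    rw [h1]
    simp [baseExp, h2]

theorem coeff_staircase_ne_zero {n k r : ℕ} (hn : k + r = n) (T : Finset (Fin n))
    (hT : T.card = k) (b : Fin n →₀ ℕ)
    (hb : ∀ i : Fin n, b i = if i ∈ T then k - 1 - (T.filter (fun j => j < i)).card else k - 1) :
    (superVandermonde n r (fun _ => k - 1) Tᶜ).coeff b ≠ 0 := by
  classical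
  rw [coeff_superVandermonde]
  set R : Finset (Fin n) := Finset.univ.filter (fun i : Fin n => (i : ℕ) < r) with hR
  have hfl : ∀ j : Fin k, r + (j : ℕ) < n := fun j => by have := j.isLt; omega
  obtain ⟨w₀, hw₀⟩ := Equiv.Perm.exists_extending_pair
    (fun j : Fin k => (⟨r + (j : ℕ), hfl j⟩ : Fin n)) (fun j => T.orderEmbOfFin hT j)
    (by intro x y h; simpa [Fin.ext_iff] using h) (T.orderEmbOfFin hT).injective
  -- any permutation satisfying the condition is `w₀` off `R`
  have hbinj : ∀ x ∈ T, ∃ j : Fin k, x = T.orderEmbOfFin hT j ∧ b x = k - 1 - j := by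
    intro x hx
    have : x ∈ Set.range (T.orderEmbOfFin hT) := by
      rw [Finset.range_orderEmbOfFin]; exact hx
    obtain ⟨j, rfl⟩ := this
    refine ⟨j, rfl, ?_⟩
    rw [hb, if_pos hx, card_filter_lt_orderEmb]
  have himg : ∀ w : Equiv.Perm (Fin n), Tᶜ.image w.symm = R ↔ ∀ i, w i ∈ T ↔ r ≤ (i : ℕ) := by
    intro w
    have h1 : ∀ i, i ∈ Tᶜ.image w.symm ↔ w i ∉ T := by
      intro i
      simp [Finset.mem_image, Equiv.symm_apply_eq]
    rw [Finset.ext_iff]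
    apply forall_congr'
    intro i
    rw [h1, hR]
    simp only [Finset.mem_filter, Finset.mem_univ, true_and, ← not_lt]
    tauto
  have hw₀T : ∀ i, w₀ i ∈ T ↔ r ≤ (i : ℕ) := by
    intro i
    constructor
    · intro h
      obtain ⟨j, hj, _⟩ := hbinj _ h
      rw [← hw₀ j] at hj
      have := w₀.injective hj
      rw [this]
      simp
    · intro h
      have hi : i = ⟨r + ((⟨i - r, by have := i.isLt; omega⟩ : Fin k) : ℕ), hfl _⟩ := by
        apply Fin.ext; simp; omega
      rw [hi, hw₀ ⟨i - r, by have := i.isLt; omega⟩]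
      exact Finset.orderEmbOfFin_mem _ _ _
  have hw₀b : ∀ i, b (w₀ i) = baseExp n k r i := by
    intro i
    by_cases h : r ≤ (i : ℕ)
    · have hi : i = ⟨r + ((⟨i - r, by have := i.isLt; omega⟩ : Fin k) : ℕ), hfl _⟩ := by
        apply Fin.ext; simp; omega
      have h1 : w₀ i = T.orderEmbOfFin hT ⟨i - r, by have := i.isLt; omega⟩ := by
        rw [← hw₀]; congr 1
      have h2 : w₀ i ∈ T := (hw₀T i).mpr h
      rw [hb, if_pos h2, h1, card_filter_lt_orderEmb]
      simp only [baseExp, Finsupp.equivFunOnFinite_symm_apply_apply, dif_neg (not_lt.mpr h)]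
      omega
    · have h2 : w₀ i ∉ T := fun h3 => h ((hw₀T i).mp h3)
      rw [hb, if_neg h2]
      simp [baseExp, not_le.mp h]
  have hagree : ∀ w : Equiv.Perm (Fin n), Tᶜ.image w.symm = R → (∀ i, b (w i) = baseExp n k r i) →
      ∀ i : Fin n, r ≤ (i : ℕ) → w i = w₀ i := by
    intro w h1 h2 i hi
    rw [himg] at h1
    obtain ⟨j, hj, hbj⟩ := hbinj _ ((h1 i).mpr hi)
    obtain ⟨j', hj', hbj'⟩ := hbinj _ ((hw₀T i).mpr hi)
    rw [h2] at hbj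
    rw [hw₀b] at hbj'
    have : j = j' := by
      apply Fin.ext
      have := j.isLt
      have := j'.isLt
      omega
    rw [hj, hj', this]
  set ε : ℚ := ((Equiv.Perm.sign w₀ : ℤ) : ℚ) * (-1 : ℚ) ^ ((R ×ˢ R).filter
            (fun p => p.1 < p.2 ∧ w₀ p.2 < w₀ p.1)).card with hε
  have hterm : ∀ w : Equiv.Perm (Fin n), Tᶜ.image w.symm = R → (∀ i, b (w i) = baseExp n k r i) →
      ((Equiv.Perm.sign w : ℤ) : ℚ) * (-1 : ℚ) ^ ((R ×ˢ R).filter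
            (fun p => p.1 < p.2 ∧ w p.2 < w p.1)).card = ε := by
    intro w h1 h2
    have h3 := hagree w h1 h2
    rw [hε, sign_mul_inv w Tᶜ R hR h1, sign_mul_inv w₀ Tᶜ R hR ((himg w₀).mpr hw₀T)]
    have h4 : ∀ i ∈ Rᶜ, w i = w₀ i := by
      intro i hi
      apply h3
      simpa [hR] using hi
    congr 2
    · congr 1
      apply Finset.filter_congr
      rintro ⟨i, j⟩ hp
      rw [Finset.mem_product] at hp
      rw [h4 _ hp.2]
    · congr 1
      apply Finset.filter_congr
      rintro ⟨i, j⟩ hp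
      rw [Finset.mem_product] at hp
      rw [h4 _ hp.2, h4 _ hp.1]
  have hε0 : ε ≠ 0 := by
    rw [hε, sign_mul_inv w₀ Tᶜ R hR ((himg w₀).mpr hw₀T)]
    simp
  have hsum : ∀ w ∈ (Finset.univ : Finset (Equiv.Perm (Fin n))),
      (if Tᶜ.image w.symm = R ∧ ∀ i, b (w i) = baseExp n k r i then
        ((Equiv.Perm.sign w : ℤ) : ℚ) * (-1 : ℚ) ^ ((R ×ˢ R).filter
            (fun p => p.1 < p.2 ∧ w p.2 < w p.1)).card else 0) =
      if Tᶜ.image w.symm = R ∧ ∀ i, b (w i) = baseExp n k r i then ε else 0 := by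
    intro w _
    split_ifs with h
    · exact hterm w h.1 h.2
    · rfl
  rw [Finset.sum_congr rfl hsum, ← Finset.sum_filter, Finset.sum_const, nsmul_eq_mul]
  apply mul_ne_zero _ hε0
  rw [Nat.cast_ne_zero, Finset.card_ne_zero]
  exact ⟨w₀, by rw [Finset.mem_filter]; exact ⟨Finset.mem_univ _, (himg w₀).mpr hw₀T, hw₀b⟩⟩

theorem linInd_part (n k r : ℕ) (hn : k + r = n) :
    LinearIndependent ℚ
      (fun c : {c : Fin n → ℕ // isSubstaircase3 n k k c} =>
        pAct (MvPolynomial.monomial (Finsupp.equivFunOnFinite.symm c.1) (1 : ℚ))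
          (superVandermonde n r (fun _ => k - 1))) := by
  classical
  rw [linearIndependent_iff']
  intro s g hg
  by_contra hcon
  push Not at hcon
  obtain ⟨c₁, hc₁, hg₁⟩ := hcon
  obtain ⟨c, hc, hmin⟩ := Finset.exists_min_image (s.filter (fun c => g c ≠ 0))
    (fun c => toLex c.1) ⟨c₁, by simp [hc₁, hg₁]⟩
  rw [Finset.mem_filter] at hc
  obtain ⟨b, ⟨T, hT, hb⟩, hcb⟩ := c.2
  set m : Fin n →₀ ℕ := Finsupp.equivFunOnFinite.symm (fun i => b i - c.1 i) with hm
  have h0 : coeff m ((∑ i ∈ s, g i •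
      pAct (MvPolynomial.monomial (Finsupp.equivFunOnFinite.symm i.1) (1 : ℚ))
          (superVandermonde n r (fun _ => k - 1))) Tᶜ) = 0 := by
    rw [hg]; simp
  rw [Finset.sum_apply, coeff_sum, Finset.sum_eq_single c] at h0
  · rw [Pi.smul_apply, coeff_smul, pAct, coeff_diffOp_monomial, smul_eq_mul] at h0
    have h1 := (mul_eq_zero.mp h0).resolve_left hc.2
    rcases mul_eq_zero.mp h1 with h2 | h2
    · refine coeff_staircase_ne_zero hn T hT _ ?_ h2
      intro i
      rw [← hb i]
      have := hcb i
      simp [hm]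
      omega
    · rw [Finset.prod_eq_zero_iff] at h2
      obtain ⟨i, _, hi⟩ := h2
      rw [Nat.cast_eq_zero, Nat.descFactorial_eq_zero_iff_lt] at hi
      omega
  · intro d hd hdc
    by_cases hgd : g d = 0
    · simp [hgd]
    rw [Pi.smul_apply, coeff_smul, pAct, coeff_diffOp_monomial]
    by_contra hne
    have hne' : coeff (m + Finsupp.equivFunOnFinite.symm d.1)
        (superVandermonde n r (fun _ => k - 1) Tᶜ) ≠ 0 := by
      intro h; apply hne; rw [h]; simp
    have hle := hmin d (by simp [hd, hgd])
    have hlt : toLex c.1 < toLex d.1 := lt_of_le_of_ne hle (fun h => hdc (Subtype.ext h).symm)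
    obtain ⟨i, hi1, hi2⟩ := hlt
    have hfin := lex_le_of_coeff_ne_zero hn T hT b hb _ hne' i (by
      intro j hj
      have h1 : c.1 j = d.1 j := hi1 j hj
      have := hcb j
      simp [hm]
      omega)
    have h1 : c.1 i < d.1 i := hi2
    have := hcb i
    simp [hm] at hfin
    omega
  · intro h
    exact absurd hc.1 h

/-- Auxiliary counting numbers. -/
def auxG (s : ℕ) : ℕ → ℕ → ℕ
  | 0, 0 => 1
  | 0, _ + 1 => 0
  | n + 1, 0 => s * auxG s n 0
  | n + 1, k + 1 => auxG s n k + (s - (k + 1)) * auxG s n (k + 1)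

theorem auxG_rec (s n : ℕ) : ∀ k, auxG (s + 1) (n + 1) (k + 1) =
    auxG s n k + (s + 1) * auxG (s + 1) n (k + 1) := by
  induction n with
  | zero => intro k; cases k <;> simp [auxG]
  | succ n ih =>
    intro k
    have e1 := ih k
    have e2 : auxG (s + 1) (n + 1) (k + 1) =
        auxG (s + 1) n k + (s - k) * auxG (s + 1) n (k + 1) := by
      rw [auxG, Nat.add_sub_add_right]
    have e3 : auxG (s + 1) (n + 2) (k + 1) =
        auxG (s + 1) (n + 1) k + (s - k) * auxG (s + 1) (n + 1) (k + 1) := by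
      rw [auxG, Nat.add_sub_add_right]
    have e4 : auxG (s + 1) (n + 1) k + (s - k) * auxG s n k =
        auxG s (n + 1) k + (s + 1) * auxG (s + 1) n k := by
      cases k with
      | zero =>
        have f1 : auxG (s + 1) (n + 1) 0 = (s + 1) * auxG (s + 1) n 0 := by rw [auxG]
        have f2 : auxG s (n + 1) 0 = s * auxG s n 0 := by rw [auxG]
        rw [f1, f2, Nat.sub_zero, add_comm]
      | succ k =>
        have f2 : auxG s (n + 1) (k + 1) = auxG s n k + (s - (k + 1)) * auxG s n (k + 1) := by
          rw [auxG]
        rw [ih k, f2]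
        ring
    rw [e3]
    linear_combination (s - k) * e1 + (s + 1) * e2.symm + e4

theorem stirling2_eq_auxG (n : ℕ) : ∀ k, stirling2 n k = auxG k n k := by
  induction n with
  | zero => intro k; cases k <;> simp [stirling2, auxG]
  | succ n ih =>
    intro k
    cases k with
    | zero => simp [stirling2, auxG]
    | succ k => rw [stirling2, auxG_rec, ih, ih]

theorem substaircase_cons_top {n k s a : ℕ} {c : Fin n → ℕ} (ha : a ≤ k)
    (h : isSubstaircase3 n k s c) :
    isSubstaircase3 (n + 1) (k + 1) s (Fin.cons a c : Fin (n + 1) → ℕ) := by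
  classical
  obtain ⟨b, ⟨T, hT, hb⟩, hcb⟩ := h
  refine ⟨(Fin.cons k b : Fin (n + 1) → ℕ), ⟨insert 0 (T.map (Fin.succEmb n)), ?_, ?_⟩, ?_⟩
  · rw [Finset.card_insert_of_notMem (by simp [Fin.succ_ne_zero]), Finset.card_map, hT]
  · intro i
    refine Fin.cases ?_ (fun i => ?_) i
    · simp
    · have hf : (insert 0 (T.map (Fin.succEmb n))).filter (fun j => j < i.succ) =
          insert 0 ((T.filter (fun j => j < i)).map (Fin.succEmb n)) := by
        ext j
        refine Fin.cases ?_ (fun j => ?_) j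
        · simp
        · simp [Fin.succ_ne_zero]
      rw [Fin.cons_succ, hb, hf,
        Finset.card_insert_of_notMem (by simp [Fin.succ_ne_zero]), Finset.card_map]
      have hmem : i.succ ∈ insert 0 (T.map (Fin.succEmb n)) ↔ i ∈ T := by
        simp [Fin.succ_ne_zero]
      simp only [hmem]
      split_ifs
      · omega
      · rfl
  · intro i
    refine Fin.cases ?_ (fun i => ?_) i
    · simpa using ha
    · simpa using hcb i

theorem substaircase_cons_const {n k s a : ℕ} {c : Fin n → ℕ} (ha : a ≤ s - 1)
    (h : isSubstaircase3 n k s c) :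
    isSubstaircase3 (n + 1) k s (Fin.cons a c : Fin (n + 1) → ℕ) := by
  classical
  obtain ⟨b, ⟨T, hT, hb⟩, hcb⟩ := h
  refine ⟨(Fin.cons (s - 1) b : Fin (n + 1) → ℕ), ⟨T.map (Fin.succEmb n), ?_, ?_⟩, ?_⟩
  · rw [Finset.card_map, hT]
  · intro i
    refine Fin.cases ?_ (fun i => ?_) i
    · simp [Fin.succ_ne_zero]
    · have hf : (T.map (Fin.succEmb n)).filter (fun j => j < i.succ) =
          (T.filter (fun j => j < i)).map (Fin.succEmb n) := by
        ext j
        refine Fin.cases ?_ (fun j => ?_) j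
        · simp
        · simp
      rw [Fin.cons_succ, hb, hf, Finset.card_map]
      have hmem : i.succ ∈ T.map (Fin.succEmb n) ↔ i ∈ T := by
        simp
      simp only [hmem]
  · intro i
    refine Fin.cases ?_ (fun i => ?_) i
    · simpa using ha
    · simpa using hcb i

theorem card_cons_image {n : ℕ} (A : Finset ℕ) (B : Finset (Fin n → ℕ)) :
    ((A ×ˢ B).image (fun p => (Fin.cons p.1 p.2 : Fin (n + 1) → ℕ))).card = A.card * B.card := by
  rw [Finset.card_image_of_injective, Finset.card_product]
  rintro ⟨a, c⟩ ⟨a', c'⟩ h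
  have := Fin.cons_injective2 h
  exact Prod.ext this.1 this.2

theorem exists_substaircases (s n : ℕ) : ∀ k ≤ s, ∃ B : Finset (Fin n → ℕ),
    (∀ c ∈ B, isSubstaircase3 n k s c) ∧ B.card = k.factorial * auxG s n k := by
  classical
  induction n with
  | zero =>
    intro k _
    cases k with
    | zero =>
      refine ⟨{fun _ => 0}, ?_, by simp [auxG]⟩
      intro c _
      exact ⟨c, ⟨∅, rfl, fun i => i.elim0⟩, fun i => le_rfl⟩
    | succ k => exact ⟨∅, by simp, by simp [auxG]⟩
  | succ n ih =>
    intro k hk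
    cases k with
    | zero =>
      obtain ⟨B, hB, hcard⟩ := ih 0 hk
      refine ⟨(Finset.range s ×ˢ B).image (fun p => (Fin.cons p.1 p.2 : Fin (n + 1) → ℕ)), ?_, ?_⟩
      · intro c hc
        rw [Finset.mem_image] at hc
        obtain ⟨⟨a, d⟩, hp, rfl⟩ := hc
        rw [Finset.mem_product, Finset.mem_range] at hp
        exact substaircase_cons_const (by have := hp.1; omega) (hB _ hp.2)
      · rw [card_cons_image, hcard, auxG]
        simp
    | succ k =>
      obtain ⟨B₁, hB₁, hcard₁⟩ := ih k (by omega)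
      obtain ⟨B₂, hB₂, hcard₂⟩ := ih (k + 1) hk
      refine ⟨(Finset.range (k + 1) ×ˢ B₁).image (fun p => (Fin.cons p.1 p.2 : Fin (n + 1) → ℕ)) ∪
        (Finset.Ico (k + 1) s ×ˢ B₂).image (fun p => (Fin.cons p.1 p.2 : Fin (n + 1) → ℕ)), ?_, ?_⟩
      · intro c hc
        rw [Finset.mem_union, Finset.mem_image, Finset.mem_image] at hc
        rcases hc with ⟨⟨a, d⟩, hp, rfl⟩ | ⟨⟨a, d⟩, hp, rfl⟩
        · rw [Finset.mem_product, Finset.mem_range] at hp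
          exact substaircase_cons_top (by have := hp.1; omega) (hB₁ _ hp.2)
        · rw [Finset.mem_product, Finset.mem_Ico] at hp
          exact substaircase_cons_const (by have := hp.1; omega) (hB₂ _ hp.2)
      · rw [Finset.card_union_of_disjoint, card_cons_image, card_cons_image, hcard₁, hcard₂, auxG,
          Finset.card_range, Nat.card_Ico, Nat.factorial_succ]
        · ring
        · rw [Finset.disjoint_left]
          intro c h1 h2
          rw [Finset.mem_image] at h1 h2
          obtain ⟨⟨a, d⟩, hp, rfl⟩ := h1
          obtain ⟨⟨a', d'⟩, hp', h⟩ := h2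
          have h3 := (Fin.cons_injective2 h).1
          rw [Finset.mem_product, Finset.mem_range] at hp
          rw [Finset.mem_product, Finset.mem_Ico] at hp'
          have := hp.1
          have := hp'.1
          simp only at *
          omega

/-- Lemma 3.5: for `k + r = n` and `a = (k-1, …, k-1)` of length `r`, the
derivatives `∂^c Δ_n(a)` over `(n,k)`-substaircase sequences `c` are linearly independent;
consequently `dim V_n(a) ≥ k! · Stir(n,k)`. -/
theorem Vspace_dim_lower_bound (n k r : ℕ) (hn : k + r = n) :
    LinearIndependent ℚ
      (fun c : {c : Fin n → ℕ // isSubstaircase3 n k k c} =>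
        pAct (MvPolynomial.monomial (Finsupp.equivFunOnFinite.symm c.1) (1 : ℚ))
          (superVandermonde n r (fun _ => k - 1))) ∧
    ((k.factorial * stirling2 n k : ℕ) : Cardinal) ≤
      Module.rank ℚ (↥(Vspace n r (fun _ => k - 1))) := by
  classical
  refine ⟨linInd_part n k r hn, ?_⟩
  obtain ⟨B, hB, hcard⟩ := exists_substaircases k n k le_rfl
  have hli := linInd_part n k r hn
  have h2 : LinearIndependent ℚ
      (fun c : {c : Fin n → ℕ // isSubstaircase3 n k k c} =>
        (⟨pAct (MvPolynomial.monomial (Finsupp.equivFunOnFinite.symm c.1) (1 : ℚ))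
          (superVandermonde n r (fun _ => k - 1)), pAct_mem_Vspace n r _ _⟩ :
            ↥(Vspace n r (fun _ => k - 1)))) :=
    LinearIndependent.of_comp (Submodule.subtype _) hli
  have h3 := h2.comp (fun c : B => (⟨c.1, hB c.1 c.2⟩ : {c : Fin n → ℕ // isSubstaircase3 n k k c}))
    (by
      intro x y h
      exact Subtype.ext (congrArg (fun z => z.1) h))
  have h4 := h3.cardinal_le_rank
  rw [stirling2_eq_auxG, ← hcard]
  simpa using h4
end

section
/- Let r < n be positive integers, let k = n − r, and let a = (0, 0, …, 0) be the zero sequence of length r. Then the Tanisaki ideal I_λ ⊆ ℚ[x_1,…,x_n] for the hook partition λ = (r+1, 1, 1, …, 1) ⊢ n — which is generated by the elementary symmetric polynomials e_1, e_2, …, e_n in all of the variables x_1,…,x_n together with all products x_{i_1} x_{i_2} ⋯ x_{i_k} of k distinct variables — equals the annihilator ann_{ℚ[x_n]} Δ_n(a) of the a-superspace Vandermonde. -/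
open MvPolynomial

/-- The Tanisaki ideal `I_λ` for the hook `λ = (r+1, 1, …, 1) ⊢ n` (with `k = n - r`):
generated by `e_1, …, e_n` together with all products of `k` distinct variables. -/
noncomputable def tanisakiHook (n k : ℕ) : Ideal (MvPolynomial (Fin n) ℚ) :=
  Ideal.span
    (((fun d => MvPolynomial.esymm (Fin n) ℚ d) '' {d : ℕ | 1 ≤ d ∧ d ≤ n}) ∪
      ((fun T : Finset (Fin n) =>
          ∏ i ∈ T, (MvPolynomial.X i : MvPolynomial (Fin n) ℚ)) ''
        {T : Finset (Fin n) | T.card = k}))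

open Finset in
/-- bilinear version of `diffOp` -/
noncomputable def dOp (n : ℕ) : MvPolynomial (Fin n) ℚ →ₗ[ℚ] MvPolynomial (Fin n) ℚ →ₗ[ℚ]
    MvPolynomial (Fin n) ℚ :=
  (basisMonomials (Fin n) ℚ).constr ℚ (fun a => (basisMonomials (Fin n) ℚ).constr ℚ (fun b =>
    (∏ i : Fin n, ((b i).descFactorial (a i) : ℚ)) • monomial (b - a) (1 : ℚ)))

theorem dOp_mono {n : ℕ} (a b : Fin n →₀ ℕ) : dOp n (monomial a 1) (monomial b 1) =
    (∏ i : Fin n, ((b i).descFactorial (a i) : ℚ)) • monomial (b - a) (1 : ℚ) := by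
  have h1 : ∀ a : Fin n →₀ ℕ, (monomial a 1 : MvPolynomial (Fin n) ℚ) =
    basisMonomials (Fin n) ℚ a := by intro a; simp
  rw [h1 a, h1 b, dOp, Module.Basis.constr_basis, Module.Basis.constr_basis]

theorem mono_smul {n : ℕ} (a : Fin n →₀ ℕ) (c : ℚ) :
    (monomial a c : MvPolynomial (Fin n) ℚ) = c • monomial a 1 := by
  rw [smul_monomial, smul_eq_mul, mul_one]

theorem diffOp_eq {n : ℕ} (p q : MvPolynomial (Fin n) ℚ) : diffOp p q = dOp n p q := by
  conv_rhs => rw [← support_sum_monomial_coeff p, ← support_sum_monomial_coeff q]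
  simp only [map_sum, LinearMap.sum_apply]
  rw [diffOp, Finset.sum_comm]
  refine Finset.sum_congr rfl fun b _ => Finset.sum_congr rfl fun a _ => ?_
  rw [mono_smul a, mono_smul b (coeff b q)]
  simp only [map_smul, LinearMap.smul_apply, dOp_mono, smul_smul]
  ring_nf

theorem dOp_mul {n : ℕ} (p q f : MvPolynomial (Fin n) ℚ) :
    dOp n (p * q) f = dOp n p (dOp n q f) := by
  induction p using MvPolynomial.induction_on' with
  | add p1 p2 h1 h2 => rw [add_mul, map_add, map_add, LinearMap.add_apply, h1, h2]; rfl
  | monomial a c =>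
  induction q using MvPolynomial.induction_on' with
  | add p1 p2 h1 h2 => rw [mul_add, map_add, map_add, LinearMap.add_apply, h1, h2, ← map_add]; rfl
  | monomial a' c' =>
  induction f using MvPolynomial.induction_on' with
  | add p1 p2 h1 h2 => simp only [map_add, h1, h2]
  | monomial b d =>
  rw [monomial_mul, mono_smul _ (c * c'), mono_smul a, mono_smul a', mono_smul b]
  simp only [map_smul, LinearMap.smul_apply, dOp_mono, smul_smul]
  rw [show b - (a + a') = b - a' - a by rw [add_comm, tsub_add_eq_tsub_tsub]]
  congr 1
  have : ∏ i : Fin n, ((b i).descFactorial ((a + a') i) : ℚ) =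
    (∏ i : Fin n, ((b i).descFactorial (a' i) : ℚ)) *
    ∏ i : Fin n, (((b - a') i).descFactorial (a i) : ℚ) := by
    rw [← Finset.prod_mul_distrib]
    refine Finset.prod_congr rfl fun i _ => ?_
    have := Nat.descFactorial_mul_descFactorial (n := b i) (k := a' i) (m := a i + a' i) (by omega)
    rw [Finsupp.add_apply, ← this]
    simp [mul_comm]
  rw [this]; ring

theorem dOp_one {n : ℕ} (f : MvPolynomial (Fin n) ℚ) : dOp n 1 f = f := by
  induction f using MvPolynomial.induction_on' with
  | add p1 p2 h1 h2 => simp only [map_add, h1, h2]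
  | monomial b d =>
  rw [mono_smul, map_smul, show (1 : MvPolynomial (Fin n) ℚ) = monomial 0 1 from rfl, dOp_mono]
  simp

theorem dOp_X {n : ℕ} (u : Fin n) (f : MvPolynomial (Fin n) ℚ) : dOp n (X u) f = pderiv u f := by
  induction f using MvPolynomial.induction_on' with
  | add p1 p2 h1 h2 => simp only [map_add, h1, h2]
  | monomial b d =>
  rw [mono_smul, map_smul, Derivation.map_smul, show (X u : MvPolynomial (Fin n) ℚ) = monomial (Finsupp.single u 1) 1 from rfl, dOp_mono, pderiv_monomial]
  congr 1
  rw [Finset.prod_eq_single u]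
  · simp [smul_monomial]
  · intro v _ hv
    rw [Finsupp.single_eq_of_ne hv]; simp
  · simp

theorem dOp_const {n : ℕ} (f : MvPolynomial (Fin n) ℚ) : dOp n f 1 = C (constantCoeff f) := by
  induction f using MvPolynomial.induction_on' with
  | add p1 p2 h1 h2 => simp only [map_add, h1, h2, LinearMap.add_apply]
  | monomial b d =>
  by_cases hb : b = 0
  · subst hb
    rw [mono_smul, map_smul, show (1 : MvPolynomial (Fin n) ℚ) = monomial 0 1 from rfl,
      LinearMap.smul_apply, dOp_mono]
    simp [MvPolynomial.smul_eq_C_mul]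
  · rw [mono_smul, map_smul, show (1 : MvPolynomial (Fin n) ℚ) = monomial 0 1 from rfl,
      LinearMap.smul_apply, dOp_mono]
    obtain ⟨i, hi⟩ : ∃ i, b i ≠ 0 := by
      by_contra! h; exact hb (Finsupp.ext h)
    rw [Finset.prod_eq_zero (Finset.mem_univ i)]
    · simp [smul_monomial, constantCoeff_monomial, hb]
    · obtain ⟨m, hm⟩ := Nat.exists_eq_succ_of_ne_zero hi
      simp [hm]

/-- annihilator ideal of one polynomial -/
noncomputable def annI {n : ℕ} (q : MvPolynomial (Fin n) ℚ) : Ideal (MvPolynomial (Fin n) ℚ) where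
  carrier := {f | dOp n f q = 0}
  add_mem' := by intro a b ha hb; simp only [Set.mem_ofPred_eq] at *; simp [ha, hb]
  zero_mem' := by simp
  smul_mem' := by intro c f hf; simp only [Set.mem_ofPred_eq, smul_eq_mul] at *; rw [dOp_mul, hf, map_zero]

theorem mem_annI {n : ℕ} {q f : MvPolynomial (Fin n) ℚ} : f ∈ annI q ↔ dOp n f q = 0 := Iff.rfl

/-- kernel of a partial derivative -/
noncomputable def kerD {n : ℕ} (u : Fin n) : Subring (MvPolynomial (Fin n) ℚ) where
  carrier := {q | pderiv u q = 0}
  add_mem' := by intro a b ha hb; simp only [Set.mem_ofPred_eq] at *; simp [ha, hb]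
  zero_mem' := by simp
  one_mem' := by simp
  neg_mem' := by intro a ha; simp only [Set.mem_ofPred_eq] at *; simp [ha]
  mul_mem' := by intro a b ha hb; simp only [Set.mem_ofPred_eq] at *; simp [ha, hb]

theorem mem_kerD {n : ℕ} {u : Fin n} {q : MvPolynomial (Fin n) ℚ} :
    q ∈ kerD u ↔ pderiv u q = 0 := Iff.rfl

theorem X_mem_kerD {n : ℕ} {u v : Fin n} (h : v ≠ u) : (X v : MvPolynomial (Fin n) ℚ) ∈ kerD u :=
  pderiv_X_of_ne h

theorem det_mem_kerD {n k : ℕ} {u : Fin n} (M : Matrix (Fin k) (Fin k) (MvPolynomial (Fin n) ℚ))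
    (h : ∀ i j, M i j ∈ kerD u) : M.det ∈ kerD u := by
  rw [Matrix.det_apply]
  refine Subring.sum_mem _ fun σ _ => ?_
  have := Subring.prod_mem (kerD u) (t := Finset.univ) (f := fun i => M (σ i) i) fun i _ => h _ _
  rcases Int.units_eq_one_or (Equiv.Perm.sign σ) with hs | hs <;> rw [hs]
  · simpa using this
  · simpa using this

theorem dOp_X_pow {n : ℕ} (u : Fin n) (q : MvPolynomial (Fin n) ℚ) (hq : q ∈ kerD u) (m j : ℕ) :
    dOp n (X u ^ m) (X u ^ j * q) = (j.descFactorial m : ℚ) • (X u ^ (j - m) * q) := by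
  induction m with
  | zero => simp [dOp_one]
  | succ m ih =>
    rw [pow_succ', dOp_mul, ih, map_smul, dOp_X, Derivation.leibniz, mem_kerD.1 hq, pderiv_pow,
      pderiv_X_self, Nat.descFactorial_succ]
    simp only [smul_eq_mul, mul_zero, zero_add, mul_one, Nat.cast_mul, MvPolynomial.smul_eq_C_mul,
      map_mul, map_natCast]
    rw [show j - m - 1 = j - (m+1) by omega]
    ring

/-- Vandermonde determinant in the variables `X (t i)` -/
noncomputable def vand {n k : ℕ} (t : Fin k → Fin n) : MvPolynomial (Fin n) ℚ :=
  (Matrix.of fun i j : Fin k => (X (t i) : MvPolynomial (Fin n) ℚ) ^ (k - 1 - (j : ℕ))).det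

theorem vand_kerD {n k : ℕ} (t : Fin k → Fin n) (u : Fin n) (h : ∀ i, t i ≠ u) :
    vand t ∈ kerD u := by
  apply det_mem_kerD
  intro i j
  exact Subring.pow_mem _ (X_mem_kerD (h i)) _

theorem vand_cons {n k : ℕ} (t : Fin k → Fin n) (u : Fin n) (h : ∀ i, t i ≠ u) :
    dOp n (X u ^ k) (vand (Fin.cons u t : Fin (k+1) → Fin n)) = (k.factorial : ℚ) • vand t := by
  rw [vand, Matrix.det_succ_row_zero, map_sum, Finset.sum_eq_single 0]
  · simp only [Fin.val_zero, pow_zero, one_mul, Matrix.of_apply, Fin.cons_zero]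
    rw [dOp_X_pow]
    · simp only [Nat.add_sub_cancel, Nat.sub_zero, Nat.sub_self, pow_zero, one_mul,
        Nat.descFactorial_self]
      congr 1
      rw [vand]
      congr 1
      ext1 i j
      simp only [Matrix.submatrix_apply, Matrix.of_apply, Fin.cons_succ, Fin.zero_succAbove,
        Fin.val_succ]
      congr 1
      omega
    · apply det_mem_kerD
      intro i j
      simp only [Matrix.submatrix_apply, Matrix.of_apply, Fin.cons_succ]
      exact Subring.pow_mem _ (X_mem_kerD (h i)) _
  · intro j _ hj
    rw [mul_assoc, mul_left_comm]
    simp only [Matrix.of_apply, Fin.cons_zero]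
    rw [dOp_X_pow]
    · rw [Nat.descFactorial_eq_zero_iff_lt.2, Nat.cast_zero, zero_smul]
      have : (j : ℕ) ≠ 0 := fun h => hj (Fin.ext h)
      omega
    · apply Subring.mul_mem
      · exact Subring.pow_mem _ (Subring.neg_mem _ (Subring.one_mem _)) _
      apply det_mem_kerD
      intro i j
      simp only [Matrix.submatrix_apply, Matrix.of_apply, Fin.cons_succ]
      exact Subring.pow_mem _ (X_mem_kerD (h i)) _
  · simp

theorem vand_perm {n k : ℕ} (t : Fin k → Fin n) (σ : Equiv.Perm (Fin k)) :
    vand (t ∘ σ) = ((Equiv.Perm.sign σ : ℤ) : MvPolynomial (Fin n) ℚ) * vand t := by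
  rw [vand, vand, ← Matrix.det_permute]
  rfl

theorem dOp_prod {n k : ℕ} (t : Fin k → Fin n) (ht : Function.Injective t) (f : Fin k → ℕ)
    (A : Finset (Fin k)) :
    dOp n (∏ i ∈ A, X (t i)) (∏ i, X (t i) ^ f i) =
      ∏ i, (if i ∈ A then (f i : MvPolynomial (Fin n) ℚ) * X (t i) ^ (f i - 1)
        else X (t i) ^ f i) := by
  induction A using Finset.induction_on with
  | empty => simp [dOp_one]
  | insert a A ha ih =>
    rw [Finset.prod_insert ha, dOp_mul, ih, dOp_X,
      ← Finset.mul_prod_erase Finset.univ _ (Finset.mem_univ a), Derivation.leibniz]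
    conv_rhs => rw [← Finset.mul_prod_erase Finset.univ _ (Finset.mem_univ a)]
    have h1 : (∏ x ∈ Finset.univ.erase a, if x ∈ A then
        (f x : MvPolynomial (Fin n) ℚ) * X (t x) ^ (f x - 1) else X (t x) ^ f x) ∈ kerD (t a) := by
      refine Subring.prod_mem _ fun i hi => ?_
      have hX : (X (t i) : MvPolynomial (Fin n) ℚ) ∈ kerD (t a) :=
        X_mem_kerD fun h => (Finset.ne_of_mem_erase hi) (ht h)
      split_ifs
      · exact Subring.mul_mem _ (natCast_mem _ _) (Subring.pow_mem _ hX _)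
      · exact Subring.pow_mem _ hX _
    rw [mem_kerD.1 h1]
    simp only [ha, if_false, mul_zero, zero_add, pderiv_pow, pderiv_X_self, mul_one,
      Finset.mem_insert_self, if_true, smul_eq_mul]
    rw [mul_comm]
    congr 1
    refine Finset.prod_congr rfl fun i hi => ?_
    simp [Finset.ne_of_mem_erase hi]

theorem det_diff_zero {n k : ℕ} (t : Fin k → Fin n) (B : Finset (Fin k)) (hB : B.Nonempty) :
    (Matrix.of fun i j : Fin k => if j ∈ B then
      ((k - 1 - (j : ℕ) : ℕ) : MvPolynomial (Fin n) ℚ) * X (t i) ^ (k - 1 - (j : ℕ) - 1)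
      else X (t i) ^ (k - 1 - (j : ℕ))).det = 0 := by
  set j := B.max' hB with hj
  have hjB : j ∈ B := B.max'_mem hB
  by_cases hk : (j : ℕ) + 1 < k
  · set j' : Fin k := ⟨j + 1, hk⟩
    have hj' : j' ∉ B := fun h => by
      have := B.le_max' _ h
      rw [← hj, Fin.le_def] at this
      simp [j'] at this
    have hne : j ≠ j' := fun h => by
      have := congrArg Fin.val h; simp [j'] at this
    set M := (Matrix.of fun i j : Fin k => if j ∈ B then
      ((k - 1 - (j : ℕ) : ℕ) : MvPolynomial (Fin n) ℚ) * X (t i) ^ (k - 1 - (j : ℕ) - 1)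
      else X (t i) ^ (k - 1 - (j : ℕ))) with hM
    have hMM : M = M.updateCol j (((k - 1 - (j : ℕ) : ℕ) : MvPolynomial (Fin n) ℚ) •
        fun i => M i j') := by
      ext1 i l
      by_cases hl : l = j
      · subst hl
        simp only [Matrix.updateCol_self, Pi.smul_apply, smul_eq_mul, hM, Matrix.of_apply, hjB,
          hj', if_true, if_false]
        congr 2
      · rw [Matrix.updateCol_ne hl]
    rw [hMM, Matrix.det_updateCol_smul, Matrix.det_zero_of_column_eq hne, mul_zero]
    intro i
    rw [Matrix.updateCol_self, Matrix.updateCol_ne hne.symm]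
  · apply Matrix.det_eq_zero_of_column_eq_zero j
    intro i
    have : k - 1 - (j : ℕ) = 0 := by omega
    simp [hjB, this]

/-- elementary symmetric polynomial of a set of variables -/
noncomputable def esum {n : ℕ} (U : Finset (Fin n)) (d : ℕ) : MvPolynomial (Fin n) ℚ :=
  ∑ A ∈ U.powersetCard d, ∏ i ∈ A, X i

theorem dOp_sum_prod {n k : ℕ} (t : Fin k → Fin n) (ht : Function.Injective t) (d : ℕ)
    (hd : 1 ≤ d) : ∑ A ∈ (Finset.univ : Finset (Fin k)).powersetCard d,
      dOp n (∏ i ∈ A, X (t i)) (vand t) = 0 := by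
  have key : ∀ σ : Equiv.Perm (Fin k), ∀ A : Finset (Fin k), dOp n (∏ i ∈ A, X (t i))
      (∏ i, (X (t (σ i)) : MvPolynomial (Fin n) ℚ) ^ (k - 1 - (i : ℕ))) =
      ∏ i, (if σ i ∈ A then
      ((k - 1 - (i : ℕ) : ℕ) : MvPolynomial (Fin n) ℚ) * X (t (σ i)) ^ (k - 1 - (i : ℕ) - 1)
      else X (t (σ i)) ^ (k - 1 - (i : ℕ))) := by
    intro σ A
    have := dOp_prod t ht (fun i => k - 1 - (σ.symm i : ℕ)) A
    rw [← Equiv.prod_comp σ (fun i => X (t i) ^ (k - 1 - (σ.symm i : ℕ))),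
      ← Equiv.prod_comp σ (fun i => if i ∈ A then _ else _)] at this
    simpa using this
  simp only [vand, Matrix.det_apply, map_sum, Matrix.of_apply, Units.smul_def, map_zsmul, key]
  rw [Finset.sum_comm]
  have h2 : ∀ σ : Equiv.Perm (Fin k), ∑ A ∈ (Finset.univ : Finset (Fin k)).powersetCard d,
      (Equiv.Perm.sign σ : ℤ) • ∏ i, (if σ i ∈ A then
      ((k - 1 - (i : ℕ) : ℕ) : MvPolynomial (Fin n) ℚ) * X (t (σ i)) ^ (k - 1 - (i : ℕ) - 1)
      else X (t (σ i)) ^ (k - 1 - (i : ℕ))) =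
      ∑ B ∈ (Finset.univ : Finset (Fin k)).powersetCard d,
      (Equiv.Perm.sign σ : ℤ) • ∏ i, (if i ∈ B then
      ((k - 1 - (i : ℕ) : ℕ) : MvPolynomial (Fin n) ℚ) * X (t (σ i)) ^ (k - 1 - (i : ℕ) - 1)
      else X (t (σ i)) ^ (k - 1 - (i : ℕ))) := by
    intro σ
    symm
    refine Finset.sum_bij' (fun B _ => B.map σ.toEmbedding) (fun A _ => A.map σ.symm.toEmbedding)
      ?_ ?_ ?_ ?_ ?_
    · intro B hB; simpa using hB
    · intro B hB; simpa using hB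
    · intro B hB; ext; simp
    · intro B hB; ext; simp
    · intro B hB; simp
  rw [Finset.sum_congr rfl fun σ _ => h2 σ, Finset.sum_comm]
  refine Finset.sum_eq_zero fun B hB => ?_
  have hB' : B.Nonempty := by
    rw [← Finset.card_pos]; rw [Finset.mem_powersetCard] at hB; omega
  rw [← det_diff_zero t B hB', Matrix.det_apply]
  simp only [Matrix.of_apply, Units.smul_def]

theorem dOp_prod_notin {n k : ℕ} (t : Fin k → Fin n) (A : Finset (Fin n)) (a : Fin n) (ha : a ∈ A)
    (h : ∀ i, t i ≠ a) : dOp n (∏ i ∈ A, X i) (vand t) = 0 := by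
  rw [← Finset.mul_prod_erase A _ ha, mul_comm, dOp_mul, dOp_X, mem_kerD.1 (vand_kerD t a h), map_zero]

theorem esum_vand {n k : ℕ} (t : Fin k → Fin n) (ht : Function.Injective t) (U : Finset (Fin n))
    (hU : ∀ i, t i ∈ U) (d : ℕ) (hd : 1 ≤ d) : dOp n (esum U d) (vand t) = 0 := by
  rw [esum, map_sum, LinearMap.sum_apply, ← dOp_sum_prod t ht d hd]
  symm
  refine Finset.sum_of_injOn (fun A => A.map ⟨t, ht⟩) ?_ ?_ ?_ ?_
  · intro A _ B _ h; exact Finset.map_injective _ h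
  · intro A hA
    simp only [Finset.mem_coe, Finset.mem_powersetCard] at hA ⊢
    refine ⟨?_, by simpa using hA.2⟩
    intro x hx
    simp only [Finset.mem_map, Function.Embedding.coeFn_mk] at hx
    obtain ⟨a, _, rfl⟩ := hx
    exact hU a
  · intro A hA hA'
    by_cases h : ∃ a ∈ A, ∀ i, t i ≠ a
    · obtain ⟨a, ha, h⟩ := h
      exact dOp_prod_notin t A a ha h
    · push Not at h
      exfalso
      apply hA'
      have hAe : (Finset.univ.filter fun i => t i ∈ A).map ⟨t, ht⟩ = A := by
        ext x
        simp only [Finset.mem_map, Finset.mem_filter, Finset.mem_univ, true_and,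
          Function.Embedding.coeFn_mk]
        constructor
        · rintro ⟨i, hi, rfl⟩; exact hi
        · intro hx
          obtain ⟨i, rfl⟩ := h x hx
          exact ⟨i, hx, rfl⟩
      refine ⟨Finset.univ.filter fun i => t i ∈ A, ?_, hAe⟩
      simp only [Finset.mem_coe, Finset.mem_powersetCard] at hA ⊢
      refine ⟨Finset.subset_univ _, ?_⟩
      rw [← hA.2, ← hAe, Finset.card_map, hAe]
  · intro A _
    simp

/-- relative hook ideal -/
noncomputable def hookI {n : ℕ} (U : Finset (Fin n)) (k : ℕ) : Ideal (MvPolynomial (Fin n) ℚ) :=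
  Ideal.span ({f | ∃ i, i ∉ U ∧ f = X i} ∪ {f | ∃ d, 1 ≤ d ∧ f = esum U d} ∪
    {f | ∃ T : Finset (Fin n), T ⊆ U ∧ T.card = k ∧ f = ∏ i ∈ T, X i})

theorem hookI_X {n : ℕ} {U : Finset (Fin n)} {k : ℕ} {i : Fin n} (h : i ∉ U) :
    X i ∈ hookI U k := Ideal.subset_span (Or.inl (Or.inl ⟨i, h, rfl⟩))

theorem hookI_esum {n : ℕ} {U : Finset (Fin n)} {k : ℕ} {d : ℕ} (h : 1 ≤ d) :
    esum U d ∈ hookI U k := Ideal.subset_span (Or.inl (Or.inr ⟨d, h, rfl⟩))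

theorem hookI_prod {n : ℕ} {U : Finset (Fin n)} {k : ℕ} {T : Finset (Fin n)} (h : T ⊆ U)
    (hT : T.card = k) : ∏ i ∈ T, X i ∈ hookI U k :=
  Ideal.subset_span (Or.inr ⟨T, h, hT, rfl⟩)

theorem hookI_le {n : ℕ} {U : Finset (Fin n)} {k : ℕ} {J : Ideal (MvPolynomial (Fin n) ℚ)}
    (h1 : ∀ i, i ∉ U → X i ∈ J) (h2 : ∀ d, 1 ≤ d → esum U d ∈ J)
    (h3 : ∀ T : Finset (Fin n), T ⊆ U → T.card = k → ∏ i ∈ T, X i ∈ J) : hookI U k ≤ J := by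
  rw [hookI, Ideal.span_le]
  rintro f ((⟨i, hi, rfl⟩ | ⟨d, hd, rfl⟩) | ⟨T, hT, hk, rfl⟩)
  · exact h1 i hi
  · exact h2 d hd
  · exact h3 T hT hk

/-- joint annihilator -/
noncomputable def annU {n : ℕ} (U : Finset (Fin n)) (k : ℕ) : Ideal (MvPolynomial (Fin n) ℚ) :=
  ⨅ t : {t : Fin k → Fin n // Function.Injective t ∧ ∀ i, t i ∈ U}, annI (vand t.1)

theorem mem_annU {n : ℕ} {U : Finset (Fin n)} {k : ℕ} {f : MvPolynomial (Fin n) ℚ} :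
    f ∈ annU U k ↔ ∀ t : Fin k → Fin n, Function.Injective t → (∀ i, t i ∈ U) →
      dOp n f (vand t) = 0 := by
  simp only [annU, Ideal.mem_iInf, mem_annI, Subtype.forall, and_imp]

theorem hookI_le_annU {n : ℕ} (U : Finset (Fin n)) (k : ℕ) (hk : 1 ≤ k) :
    hookI U k ≤ annU U k := by
  apply hookI_le
  · intro i hi
    rw [mem_annU]
    intro t ht hU
    rw [dOp_X]
    exact vand_kerD t i fun j hj => hi (hj ▸ hU j)
  · intro d hd
    rw [mem_annU]
    intro t ht hU
    exact esum_vand t ht U hU d hd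
  · intro T hT hTk
    rw [mem_annU]
    intro t ht hU
    by_cases h : ∃ a ∈ T, ∀ i, t i ≠ a
    · obtain ⟨a, ha, h⟩ := h
      exact dOp_prod_notin t T a ha h
    · push Not at h
      have hTe : T = Finset.univ.image t := by
        apply Finset.eq_of_subset_of_card_le
        · intro x hx
          obtain ⟨i, rfl⟩ := h x hx
          simp
        · rw [Finset.card_image_of_injective _ ht, hTk]; simp
      have := esum_vand t ht T (fun i => by rw [hTe]; simp) T.card (by omega)
      rw [esum, Finset.powersetCard_self, Finset.sum_singleton] at this
      exact this

theorem esum_erase {n : ℕ} {U : Finset (Fin n)} {u : Fin n} (hu : u ∈ U) (d : ℕ) :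
    esum U (d + 1) = esum (U.erase u) (d + 1) + X u * esum (U.erase u) d := by
  conv_lhs => rw [← Finset.insert_erase hu]
  have hu' : u ∉ U.erase u := Finset.notMem_erase u U
  rw [esum, Finset.powersetCard_succ_insert hu', Finset.sum_union]
  · rw [← esum]
    congr 1
    rw [esum, Finset.mul_sum, Finset.sum_image]
    · refine Finset.sum_congr rfl fun A hA => ?_
      rw [Finset.prod_insert]
      exact fun h => hu' ((Finset.mem_powersetCard.1 hA).1 h)
    · intro A hA B hB h
      have hA' : u ∉ A := fun h => hu' ((Finset.mem_powersetCard.1 hA).1 h)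
      have hB' : u ∉ B := fun h => hu' ((Finset.mem_powersetCard.1 hB).1 h)
      rw [← Finset.erase_insert hA', ← Finset.erase_insert hB', h]
  · rw [Finset.disjoint_left]
    intro A hA hA'
    obtain ⟨B, _, rfl⟩ := Finset.mem_image.1 hA'
    exact hu' ((Finset.mem_powersetCard.1 hA).1 (Finset.mem_insert_self _ _))

theorem esum_erase_mem {n : ℕ} {U : Finset (Fin n)} {u : Fin n} (hu : u ∈ U) {k d : ℕ}
    (hd : 1 ≤ d) : esum (U.erase u) d ∈ hookI U k ⊔ Ideal.span {X u} := by
  obtain ⟨d, rfl⟩ := Nat.exists_eq_add_of_le' hd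
  have := esum_erase hu d
  rw [← sub_eq_iff_eq_add] at this
  rw [← this]
  apply Ideal.sub_mem
  · exact Ideal.mem_sup_left (hookI_esum (by omega))
  · exact Ideal.mem_sup_right (Ideal.mul_mem_right _ _ (Ideal.mem_span_singleton_self _))

theorem X_erase_mem {n : ℕ} {U : Finset (Fin n)} {u i : Fin n} {k : ℕ}
    (hi : i ∉ U.erase u) : X i ∈ hookI U k ⊔ Ideal.span {X u} := by
  by_cases h : i = u
  · subst h; exact Ideal.mem_sup_right (Ideal.mem_span_singleton_self _)
  · exact Ideal.mem_sup_left (hookI_X fun h' => hi (Finset.mem_erase.2 ⟨h, h'⟩))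

theorem hookI_erase_le {n : ℕ} {U : Finset (Fin n)} {u : Fin n} (hu : u ∈ U) (k : ℕ) :
    hookI (U.erase u) k ≤ hookI U k ⊔ Ideal.span {X u} := by
  apply hookI_le
  · intro i hi; exact X_erase_mem hi
  · intro d hd; exact esum_erase_mem hu hd
  · intro T hT hk
    exact Ideal.mem_sup_left (hookI_prod (hT.trans (Finset.erase_subset _ _)) hk)

theorem pow_mul_mem {n : ℕ} {I : Ideal (MvPolynomial (Fin n) ℚ)} {u : Fin n} (j : ℕ)
    {f : MvPolynomial (Fin n) ℚ} (hf : f ∈ I ⊔ Ideal.span {X u}) :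
    X u ^ j * f ∈ I ⊔ Ideal.span {X u ^ (j + 1)} := by
  rw [sup_comm, Ideal.mem_span_singleton_sup] at hf ⊢
  obtain ⟨a, b, hb, rfl⟩ := hf
  exact ⟨a, X u ^ j * b, I.mul_mem_left _ hb, by ring⟩

theorem hookI_erase_mul {n : ℕ} {U : Finset (Fin n)} {u : Fin n} (hu : u ∈ U) (k j : ℕ)
    (hk : 1 ≤ k) (hj : 1 ≤ j ∨ U.card = k + 1) {g : MvPolynomial (Fin n) ℚ}
    (hg : g ∈ hookI (U.erase u) k) :
    X u ^ j * g ∈ hookI U (k + 1) ⊔ Ideal.span {X u ^ (j + 1)} := by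
  suffices h : hookI (U.erase u) k ≤
      (hookI U (k + 1) ⊔ Ideal.span {X u ^ (j + 1)}).colon {X u ^ j} by
    have := h hg
    rw [Submodule.mem_colon_singleton, smul_eq_mul, mul_comm] at this
    exact this
  apply hookI_le
  · intro i hi
    rw [Submodule.mem_colon_singleton, smul_eq_mul, mul_comm]
    exact pow_mul_mem j (X_erase_mem hi)
  · intro d hd
    rw [Submodule.mem_colon_singleton, smul_eq_mul, mul_comm]
    exact pow_mul_mem j (esum_erase_mem hu hd)
  · intro T hT hTk
    rw [Submodule.mem_colon_singleton, smul_eq_mul, mul_comm]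
    have huT : u ∉ T := fun h => Finset.notMem_erase u U (hT h)
    rcases hj with hj | hj
    · apply Ideal.mem_sup_left
      obtain ⟨j, rfl⟩ := Nat.exists_eq_add_of_le' hj
      rw [pow_succ, mul_assoc]
      apply Ideal.mul_mem_left
      rw [← Finset.prod_insert huT]
      apply hookI_prod
      · exact Finset.insert_subset hu (hT.trans (Finset.erase_subset _ _))
      · rw [Finset.card_insert_of_notMem huT, hTk]
    · have hTU : T = U.erase u := by
        apply Finset.eq_of_subset_of_card_le hT
        rw [Finset.card_erase_of_mem hu]; omega
      have h1 : ∏ i ∈ T, (X i : MvPolynomial (Fin n) ℚ) = esum (U.erase u) k := by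
        rw [esum, ← hTU, ← hTk, Finset.powersetCard_self, Finset.sum_singleton]
      rw [h1]
      exact pow_mul_mem j (esum_erase_mem hu hk)

theorem X_pow_mem {n : ℕ} {U : Finset (Fin n)} {u : Fin n} (hu : u ∈ U) (k : ℕ) :
    X u ^ k ∈ hookI U k := by
  have h1 : ∀ d, esum (U.erase u) d - (-X u) ^ d ∈ hookI U k := by
    intro d
    induction d with
    | zero => simp [esum]
    | succ d ih =>
      have := esum_erase hu d
      rw [← sub_eq_iff_eq_add] at this
      rw [← this]
      have h2 := Ideal.sub_mem _ (hookI_esum (U := U) (k := k) (d := d + 1) (by omega))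
        (Ideal.mul_mem_left _ (X u) ih)
      convert h2 using 1
      ring
  have h2 : esum (U.erase u) k ∈ hookI U k := by
    rw [esum]
    refine Ideal.sum_mem _ fun T hT => ?_
    rw [Finset.mem_powersetCard] at hT
    exact hookI_prod (hT.1.trans (Finset.erase_subset _ _)) hT.2
  have h3 := Ideal.mul_mem_left _ ((-1) ^ k) (Ideal.sub_mem _ h2 (h1 k))
  convert h3 using 1
  rw [sub_sub_cancel, ← mul_pow]
  simp

theorem annU_le_hookI {n : ℕ} : ∀ (m : ℕ) (U : Finset (Fin n)) (k : ℕ), U.card = m → 1 ≤ k →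
    k ≤ U.card → annU U k ≤ hookI U k := by
  intro m
  induction m with
  | zero => intro U k h1 h2 h3; omega
  | succ m ih =>
  intro U k hm hk hkU f hf
  obtain ⟨u, hu⟩ : U.Nonempty := Finset.card_pos.1 (by omega)
  have hcard : (U.erase u).card = m := by rw [Finset.card_erase_of_mem hu]; omega
  obtain ⟨k, rfl⟩ := Nat.exists_eq_add_of_le' hk
  rcases Nat.eq_zero_or_pos k with rfl | hk0
  · have h1 := mem_annU.1 hf (fun _ => u) (fun a b _ => Subsingleton.elim (α := Fin 1) a b) (fun _ => hu)
    have h2 : vand (fun _ : Fin (0+1) => u) = 1 := by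
      rw [vand, Matrix.det_fin_one]; simp
    rw [h2, dOp_const, C_eq_zero] at h1
    have h3 : f ∈ Ideal.span (X '' (Set.univ : Set (Fin n)) : Set (MvPolynomial (Fin n) ℚ)) := by
      rw [mem_ideal_span_X_image]
      intro a ha
      have : a ≠ 0 := by
        rintro rfl
        rw [mem_support_iff] at ha
        exact ha h1
      by_contra! h
      exact this (Finsupp.ext fun i => by simpa using h i)
    refine Ideal.span_le.2 ?_ h3
    rintro _ ⟨i, _, rfl⟩
    by_cases hi : i ∈ U
    · have := hookI_prod (U := U) (k := 0 + 1) (T := {i}) (by simpa using hi) (by simp)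
      simpa using this
    · exact hookI_X hi
  · have key : ∀ j, j ≤ k + 1 → f ∈ hookI U (k + 1) ⊔ Ideal.span {X u ^ j} := by
      intro j
      induction j with
      | zero => intro _; simp
      | succ j ihj =>
      intro hj
      by_cases hc : 1 ≤ j ∨ U.card = k + 1
      · have h1 := ihj (by omega)
        rw [sup_comm, Ideal.mem_span_singleton_sup] at h1
        obtain ⟨g, b, hb, hgb⟩ := h1
        have hg : g * X u ^ j ∈ annU U (k + 1) := by
          have : g * X u ^ j = f - b := by rw [← hgb]; ring
          rw [this]
          exact Ideal.sub_mem _ hf (hookI_le_annU U (k + 1) hk hb)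
        have hg' : g ∈ annU (U.erase u) k := by
          rw [mem_annU]
          intro t ht hU
          have hne : ∀ i, t i ≠ u := fun i => Finset.ne_of_mem_erase (hU i)
          have h2 : g * X u ^ k ∈ annU U (k + 1) := by
            have := Ideal.mul_mem_left _ (X u ^ (k - j)) hg
            convert this using 1
            rw [mul_left_comm, ← pow_add, Nat.sub_add_cancel (by omega)]
          have h3 := mem_annU.1 h2 (Fin.cons u t)
            (Fin.cons_injective_iff.2 ⟨fun ⟨i, hi⟩ => hne i hi, ht⟩) (by
              intro i
              refine Fin.cases ?_ (fun i => ?_) i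
              · simpa using hu
              · simpa using Finset.mem_of_mem_erase (hU i))
          rw [dOp_mul, vand_cons t u hne, map_smul, smul_eq_zero] at h3
          rcases h3 with h3 | h3
          · exfalso
            exact Nat.factorial_ne_zero k (by exact_mod_cast h3)
          · exact h3
        have hg2 := ih (U.erase u) k hcard hk0 (by omega) hg'
        rw [← hgb]
        apply Ideal.add_mem
        · rw [mul_comm]
          exact hookI_erase_mul hu k j hk0 hc hg2
        · exact Ideal.mem_sup_left hb
      · push Not at hc
        have hj0 : j = 0 := by omega
        subst hj0
        have h1 : f ∈ annU (U.erase u) (k + 1) := by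
          rw [mem_annU]
          intro t ht hU
          exact mem_annU.1 hf t ht fun i => Finset.mem_of_mem_erase (hU i)
        have h2 := hookI_erase_le hu (k + 1) (ih (U.erase u) (k + 1) hcard hk (by omega) h1)
        simpa using h2
    have h1 := key (k + 1) le_rfl
    rwa [sup_eq_left.2] at h1
    rw [Ideal.span_singleton_le_iff_mem]
    exact X_pow_mem hu _

theorem tanisaki_eq (n k : ℕ) (hk : 1 ≤ k) (hkn : k ≤ n) :
    tanisakiHook n k = annU Finset.univ k := by
  have h1 : annU (Finset.univ : Finset (Fin n)) k = hookI Finset.univ k :=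
    le_antisymm (annU_le_hookI n _ k (by simp) hk (by simpa using hkn)) (hookI_le_annU _ k hk)
  rw [h1]
  apply le_antisymm
  · rw [tanisakiHook, Ideal.span_le]
    rintro f (⟨d, ⟨hd, _⟩, rfl⟩ | ⟨T, hT, rfl⟩)
    · exact hookI_esum hd
    · exact hookI_prod (Finset.subset_univ _) hT
  · apply hookI_le
    · intro i hi; exact absurd (Finset.mem_univ i) hi
    · intro d hd
      by_cases hdn : d ≤ n
      · exact Ideal.subset_span (Or.inl ⟨d, ⟨hd, hdn⟩, rfl⟩)
      · rw [esum, Finset.powersetCard_eq_empty.2 (by simpa using hdn)]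
        simp
    · intro T _ hT
      exact Ideal.subset_span (Or.inr ⟨T, hT, rfl⟩)

theorem sign_prod {n : ℕ} (w : Equiv.Perm (Fin n)) : ((Equiv.Perm.sign w : ℤ) : ℚ) =
    ∏ i, ∏ j, if i < j ∧ w j < w i then (-1 : ℚ) else 1 := by
  rw [Equiv.Perm.sign_eq_prod_prod_Ioi]
  push_cast
  refine Finset.prod_congr rfl fun i _ => ?_
  rw [← Finset.prod_subset (Finset.subset_univ (Finset.Ioi i))]
  · refine Finset.prod_congr rfl fun j hj => ?_
    have hij : i < j := Finset.mem_Ioi.1 hj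
    by_cases h : w i < w j
    · simp [h, h.le, not_lt.2 h.le]
    · have h' : w j < w i := lt_of_le_of_ne (not_lt.1 h) fun h => hij.ne' (w.injective h)
      simp [h, hij, h']
  · intro j _ hj
    have : ¬ i < j := fun h => hj (Finset.mem_Ioi.2 h)
    simp [this]

theorem T0_eq (r k : ℕ) : (Finset.univ.filter (fun i : Fin (r + k) => (i : ℕ) < r)) =
    Finset.univ.map (Fin.castAddEmb k) := by
  ext x
  simp only [Finset.mem_filter, Finset.mem_univ, true_and, Finset.mem_map, Fin.castAddEmb_apply]
  constructor
  · intro h; exact ⟨⟨x, h⟩, by ext; simp⟩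
  · rintro ⟨i, rfl⟩; simp

theorem sign_split {r k : ℕ} (w : Equiv.Perm (Fin (r + k))) (S : Finset (Fin (r + k)))
    (hw : S.image w.symm = Finset.univ.filter (fun i : Fin (r + k) => (i : ℕ) < r))
    (t : Fin k → Fin (r + k)) (ht : StrictMono t) (τ : Equiv.Perm (Fin k))
    (hτ : ∀ j, w (Fin.natAdd r j) = t (τ j)) :
    ((Equiv.Perm.sign w : ℤ) : ℚ) * ((-1 : ℚ) ^ (((S.image w.symm) ×ˢ (S.image w.symm)).filter
        (fun p => p.1 < p.2 ∧ w p.2 < w p.1)).card) =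
    (∏ a ∈ S, ∏ j, if t j < a then (-1 : ℚ) else 1) * ((Equiv.Perm.sign τ : ℤ) : ℚ) := by
  have hS : S = Finset.univ.image (fun i : Fin r => w (Fin.castAdd k i)) := by
    rw [T0_eq] at hw
    have : S = (S.image w.symm).image w := by simp [Finset.image_image]
    rw [this, hw, Finset.map_eq_image, Finset.image_image]
    rfl
  have hinv : ((-1 : ℚ) ^ (((S.image w.symm) ×ˢ (S.image w.symm)).filter
        (fun p => p.1 < p.2 ∧ w p.2 < w p.1)).card) =
      ∏ i : Fin r, ∏ j : Fin r, if Fin.castAdd k i < Fin.castAdd k j ∧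
        w (Fin.castAdd k j) < w (Fin.castAdd k i) then (-1 : ℚ) else 1 := by
    rw [← Finset.prod_const, Finset.prod_filter, hw, T0_eq, Finset.prod_product, Finset.prod_map]
    refine Finset.prod_congr rfl fun i _ => ?_
    rw [Finset.prod_map]
    rfl
  have hcross : (∏ a ∈ S, ∏ j, if t j < a then (-1 : ℚ) else 1) =
      ∏ i : Fin r, ∏ j : Fin k, if Fin.castAdd k i < Fin.natAdd r j ∧
        w (Fin.natAdd r j) < w (Fin.castAdd k i) then (-1 : ℚ) else 1 := by
    rw [hS, Finset.prod_image]
    · refine Finset.prod_congr rfl fun i _ => ?_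
      rw [← Equiv.prod_comp τ]
      refine Finset.prod_congr rfl fun j _ => ?_
      have : Fin.castAdd k i < Fin.natAdd r j := by
        rw [Fin.lt_def]; simp; omega
      simp only [this, true_and, hτ]
    · intro a _ b _ h
      simpa using h
  have hlast : ((Equiv.Perm.sign τ : ℤ) : ℚ) =
      ∏ i : Fin k, ∏ j : Fin k, if Fin.natAdd r i < Fin.natAdd r j ∧
        w (Fin.natAdd r j) < w (Fin.natAdd r i) then (-1 : ℚ) else 1 := by
    rw [sign_prod]
    refine Finset.prod_congr rfl fun i _ => Finset.prod_congr rfl fun j _ => ?_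
    simp only [hτ, ht.lt_iff_lt, Fin.natAdd_lt_natAdd_iff]
  have hother : ∀ i : Fin k, (∏ j : Fin r, if Fin.natAdd r i < Fin.castAdd k j ∧
        w (Fin.castAdd k j) < w (Fin.natAdd r i) then (-1 : ℚ) else 1) = 1 := by
    intro i
    refine Finset.prod_eq_one fun j _ => ?_
    have : ¬ Fin.natAdd r i < Fin.castAdd k j := by
      rw [Fin.lt_def]; simp; omega
    simp [this]
  rw [hinv, hcross, hlast, sign_prod, Fin.prod_univ_add]
  simp only [Fin.prod_univ_add, Finset.prod_mul_distrib, hother, Finset.prod_const_one, one_mul]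
  set A := ∏ i : Fin r, ∏ j : Fin r, if Fin.castAdd k i < Fin.castAdd k j ∧
        w (Fin.castAdd k j) < w (Fin.castAdd k i) then (-1 : ℚ) else 1 with hA
  have hAA : A * A = 1 := by
    rw [hA, ← Finset.prod_mul_distrib]
    refine Finset.prod_eq_one fun i _ => ?_
    rw [← Finset.prod_mul_distrib]
    refine Finset.prod_eq_one fun j _ => ?_
    split_ifs <;> norm_num
  linear_combination (∏ i : Fin r, ∏ j : Fin k, if Fin.castAdd k i < Fin.natAdd r j ∧
        w (Fin.natAdd r j) < w (Fin.castAdd k i) then (-1 : ℚ) else 1) *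
      (∏ i : Fin k, ∏ j : Fin k, if Fin.natAdd r i < Fin.natAdd r j ∧
        w (Fin.natAdd r j) < w (Fin.natAdd r i) then (-1 : ℚ) else 1) * hAA

/-- the leading exponent -/
noncomputable def expo (r k : ℕ) : Fin (r + k) →₀ ℕ :=
  Finsupp.equivFunOnFinite.symm
    (fun i : Fin (r + k) => if h : (i : ℕ) < r then (fun _ : Fin r => 0) ⟨(i : ℕ), h⟩
      else r + k - 1 - (i : ℕ))

theorem rename_expo (r k : ℕ) (w : Equiv.Perm (Fin (r + k))) :
    rename w (monomial (expo r k) (1 : ℚ)) =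
      ∏ j : Fin k, (X (w (Fin.natAdd r j)) : MvPolynomial (Fin (r + k)) ℚ) ^ (k - 1 - (j : ℕ)) := by
  rw [monomial_eq, Finsupp.prod_fintype _ _ (by simp)]
  simp only [map_one, one_mul, map_prod, map_pow, rename_X]
  rw [Fin.prod_univ_add]
  rw [Finset.prod_eq_one, one_mul]
  · refine Finset.prod_congr rfl fun j _ => ?_
    congr 1
    simp [expo]
    omega
  · intro i _
    simp [expo]

/-- one term of the super Vandermonde coefficient -/
noncomputable def term (r k : ℕ) (S : Finset (Fin (r + k))) (w : Equiv.Perm (Fin (r + k))) :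
    MvPolynomial (Fin (r + k)) ℚ :=
  ((Equiv.Perm.sign w : ℤ) : ℚ) • permAct w (sMono (expo r k)
        (Finset.univ.filter (fun i : Fin (r + k) => (i : ℕ) < r))) S

theorem sv_eq (r k : ℕ) (S : Finset (Fin (r + k))) :
    superVandermonde (r + k) r (fun _ => 0) S = ∑ w, term r k S w := by
  rw [superVandermonde, Finset.sum_apply]
  rfl

theorem term_zero {r k : ℕ} {S : Finset (Fin (r + k))} {w : Equiv.Perm (Fin (r + k))}
    (h : S.image w.symm ≠ Finset.univ.filter (fun i : Fin (r + k) => (i : ℕ) < r)) :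
    term r k S w = 0 := by
  simp [term, permAct, sMono, h]

theorem term_eq {r k : ℕ} {S : Finset (Fin (r + k))} {w : Equiv.Perm (Fin (r + k))}
    (hw : S.image w.symm = Finset.univ.filter (fun i : Fin (r + k) => (i : ℕ) < r))
    (t : Fin k → Fin (r + k)) (ht : StrictMono t) (τ : Equiv.Perm (Fin k))
    (hτ : ∀ j, w (Fin.natAdd r j) = t (τ j)) :
    term r k S w = (∏ a ∈ S, ∏ j, if t j < a then (-1 : ℚ) else 1) •
      (((Equiv.Perm.sign τ : ℤ) : ℚ) • ∏ j : Fin k,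
        (X (t (τ j)) : MvPolynomial (Fin (r + k)) ℚ) ^ (k - 1 - (j : ℕ))) := by
  rw [smul_smul, ← sign_split w S hw t ht τ hτ, term, permAct, smul_smul]
  congr 1
  rw [sMono, if_pos hw, rename_expo]
  simp only [hτ]

/-- extend a permutation of the last `k` letters -/
def ext2 (r k : ℕ) (p : Equiv.Perm (Fin k)) : Equiv.Perm (Fin (r + k)) :=
  finSumFinEquiv.permCongr (Equiv.sumCongr (Equiv.refl (Fin r)) p)

theorem ext2_nat (r k : ℕ) (p : Equiv.Perm (Fin k)) (j : Fin k) :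
    ext2 r k p (Fin.natAdd r j) = Fin.natAdd r (p j) := by
  simp [ext2, Equiv.permCongr_apply]

theorem ext2_cast (r k : ℕ) (p : Equiv.Perm (Fin k)) (j : Fin r) :
    ext2 r k p (Fin.castAdd k j) = Fin.castAdd k j := by
  simp [ext2, Equiv.permCongr_apply]

theorem mem_C_iff {r k : ℕ} {S : Finset (Fin (r + k))} (w : Equiv.Perm (Fin (r + k))) :
    S.image w.symm = Finset.univ.filter (fun i : Fin (r + k) => (i : ℕ) < r) ↔
      ∀ i : Fin (r + k), w i ∈ S ↔ (i : ℕ) < r := by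
  rw [Finset.ext_iff]
  refine forall_congr' fun i => ?_
  simp only [Finset.mem_image, Finset.mem_filter, Finset.mem_univ, true_and]
  refine iff_congr ?_ Iff.rfl
  constructor
  · rintro ⟨a, ha, rfl⟩; simpa using ha
  · intro h; exact ⟨w i, h, by simp⟩

theorem ext2_lt (r k : ℕ) (p : Equiv.Perm (Fin k)) (i : Fin (r + k)) :
    ((ext2 r k p i : ℕ) < r) ↔ (i : ℕ) < r := by
  refine Fin.addCases (fun i => ?_) (fun i => ?_) i
  · rw [ext2_cast]
  · rw [ext2_nat]; simp

theorem sv_coeff {r k : ℕ} (S : Finset (Fin (r + k))) (t : Fin k → Fin (r + k)) (ht : StrictMono t)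
    (hS : ∀ x, x ∉ S ↔ ∃ j, t j = x) :
    ∃ c : ℚ, c ≠ 0 ∧ superVandermonde (r + k) r (fun _ => 0) S = c • vand t := by
  classical
  set cS := (∏ a ∈ S, ∏ j, if t j < a then (-1 : ℚ) else 1) with hcS
  have hcS0 : cS ≠ 0 := by
    rw [hcS]
    refine Finset.prod_ne_zero_iff.2 fun a _ => Finset.prod_ne_zero_iff.2 fun j _ => ?_
    split_ifs <;> norm_num
  set CC := Finset.univ.filter fun w : Equiv.Perm (Fin (r + k)) =>
    S.image w.symm = Finset.univ.filter (fun i : Fin (r + k) => (i : ℕ) < r) with hCC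
  have hmemC : ∀ w, w ∈ CC ↔ ∀ i : Fin (r + k), w i ∈ S ↔ (i : ℕ) < r := by
    intro w; rw [hCC, Finset.mem_filter, mem_C_iff]; simp
  -- permutation `τ`
  have hτ : ∀ w ∈ CC, ∃ τ : Equiv.Perm (Fin k), ∀ j, w (Fin.natAdd r j) = t (τ j) := by
    intro w hw
    rw [hmemC] at hw
    have h1 : ∀ j : Fin k, ∃ j', t j' = w (Fin.natAdd r j) := by
      intro j
      rw [← hS, hw]; simp
    choose f hf using h1
    have hinj : Function.Injective f := by
      intro a b hab
      have := hf a
      rw [hab, hf b] at this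
      simpa using this.symm
    exact ⟨Equiv.ofBijective f (Finite.injective_iff_bijective.1 hinj), fun j => (hf j).symm⟩
  have hinner : ∀ w, ∑ p : Equiv.Perm (Fin k), term r k S (w * ext2 r k p) =
      if w ∈ CC then cS • vand t else 0 := by
    intro w
    have hiff : ∀ p, w * ext2 r k p ∈ CC ↔ w ∈ CC := by
      intro p
      rw [hmemC, hmemC, ← (ext2 r k p).forall_congr_right (q := fun i => w i ∈ S ↔ (i : ℕ) < r)]
      refine forall_congr' fun i => ?_
      rw [ext2_lt]; rfl
    split_ifs with hw
    · obtain ⟨τ, hτ⟩ := hτ w hw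
      have h1 : ∀ p : Equiv.Perm (Fin k), term r k S (w * ext2 r k p) =
          cS • (((Equiv.Perm.sign (τ * p) : ℤ) : ℚ) • ∏ j : Fin k,
        (X (t ((τ * p) j)) : MvPolynomial (Fin (r + k)) ℚ) ^ (k - 1 - (j : ℕ))) := by
        intro p
        have h2 := (hiff p).2 hw
        rw [hCC, Finset.mem_filter] at h2
        apply term_eq h2.2 t ht
        intro j
        rw [Equiv.Perm.mul_apply, ext2_nat, hτ]; rfl
      rw [Finset.sum_congr rfl fun p _ => h1 p, ← Finset.smul_sum]
      congr 1
      refine (Equiv.sum_comp (Equiv.mulLeft τ) (fun σ : Equiv.Perm (Fin k) =>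
        (((Equiv.Perm.sign σ : ℤ) : ℚ) • ∏ j : Fin k,
        (X (t (σ j)) : MvPolynomial (Fin (r + k)) ℚ) ^ (k - 1 - (j : ℕ))))).trans ?_
      rw [vand, Matrix.det_apply]
      refine Finset.sum_congr rfl fun σ _ => ?_
      simp only [Matrix.of_apply, Units.smul_def, Int.cast_smul_eq_zsmul]
    · refine Finset.sum_eq_zero fun p _ => term_zero fun h => hw ((hiff p).1 ?_)
      rw [hCC, Finset.mem_filter]; exact ⟨Finset.mem_univ _, h⟩
  have hsum : ((Fintype.card (Equiv.Perm (Fin k)) : ℕ) : ℚ) •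
      superVandermonde (r + k) r (fun _ => 0) S = ((CC.card : ℚ) * cS) • vand t := by
    have h1 : ∀ p : Equiv.Perm (Fin k), ∑ w, term r k S (w * ext2 r k p) =
        superVandermonde (r + k) r (fun _ => 0) S := by
      intro p
      rw [sv_eq]
      exact Equiv.sum_comp (Equiv.mulRight (ext2 r k p)) (fun w => term r k S w)
    have h2 : ∑ p : Equiv.Perm (Fin k), ∑ w, term r k S (w * ext2 r k p) =
        ((Fintype.card (Equiv.Perm (Fin k)) : ℕ) : ℚ) •
      superVandermonde (r + k) r (fun _ => 0) S := by
      rw [Finset.sum_congr rfl fun p _ => h1 p, Finset.sum_const, Finset.card_univ,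
        Nat.cast_smul_eq_nsmul]
    rw [← h2, Finset.sum_comm, Finset.sum_congr rfl fun w _ => hinner w, ← Finset.sum_filter,
      Finset.sum_const, Finset.filter_univ_mem, mul_smul, Nat.cast_smul_eq_nsmul]
  have hcard : CC.Nonempty := by
    have hSc : Sᶜ = Finset.univ.image t := by
      ext x; rw [Finset.mem_compl, hS]; simp
    have hSr : S.card = r := by
      have h1 := Finset.card_compl S
      have h2 := Finset.card_le_univ S
      rw [hSc, Finset.card_image_of_injective _ ht.injective] at h1
      simp at h1 h2
      omega
    have e1 : {i : Fin (r + k) // (i : ℕ) < r} ≃ {x // x ∈ S} := by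
      apply Fintype.equivOfCardEq
      rw [Fintype.card_coe, hSr, Fintype.card_subtype, T0_eq]
      simp
    refine ⟨e1.extendSubtype, ?_⟩
    rw [hmemC]
    intro i
    constructor
    · intro h
      by_contra h'
      exact e1.extendSubtype_not_mem i h' h
    · intro h
      exact e1.extendSubtype_mem i h
  have hN : ((Fintype.card (Equiv.Perm (Fin k)) : ℕ) : ℚ) ≠ 0 := by
    exact_mod_cast Fintype.card_ne_zero
  refine ⟨((Fintype.card (Equiv.Perm (Fin k)) : ℕ) : ℚ)⁻¹ * ((CC.card : ℚ) * cS), ?_, ?_⟩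
  · refine mul_ne_zero (inv_ne_zero hN) (mul_ne_zero ?_ hcS0)
    exact_mod_cast hcard.card_pos.ne'
  · rw [mul_smul, ← hsum, smul_smul, inv_mul_cancel₀ hN, one_smul]

theorem sv_coeff_zero {r k : ℕ} (S : Finset (Fin (r + k))) (hS : S.card ≠ r) :
    superVandermonde (r + k) r (fun _ => 0) S = 0 := by
  rw [sv_eq]
  refine Finset.sum_eq_zero fun w _ => term_zero fun h => hS ?_
  have := congrArg Finset.card h
  rw [Finset.card_image_of_injective _ w.symm.injective, T0_eq] at this
  simpa using this

theorem mem_annU_univ {r k : ℕ} (f : MvPolynomial (Fin (r + k)) ℚ) :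
    f ∈ annU Finset.univ k ↔ pAct f (superVandermonde (r + k) r (fun _ => 0)) = 0 := by
  rw [mem_annU]
  constructor
  · intro h
    funext S
    show diffOp f _ = 0
    rw [diffOp_eq]
    by_cases hS : S.card = r
    · have hc : Sᶜ.card = k := by rw [Finset.card_compl, hS]; simp
      obtain ⟨c, _, hc'⟩ := sv_coeff S (Sᶜ.orderEmbOfFin hc) (Sᶜ.orderEmbOfFin hc).strictMono (by
        intro x
        have := Set.ext_iff.1 (Finset.range_orderEmbOfFin Sᶜ hc) x
        rw [← Finset.mem_compl]
        exact this.symm)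
      rw [hc', map_smul, h _ (Sᶜ.orderEmbOfFin hc).injective (fun _ => Finset.mem_univ _), smul_zero]
    · rw [sv_coeff_zero S hS, map_zero]
  · intro h t ht _
    set S := (Finset.univ.image t)ᶜ with hSdef
    have hSc : Sᶜ = Finset.univ.image t := by rw [hSdef, compl_compl]
    have hc : Sᶜ.card = k := by rw [hSc, Finset.card_image_of_injective _ ht]; simp
    set t0 := Sᶜ.orderEmbOfFin hc with ht0
    have hr : ∀ x, x ∈ Sᶜ ↔ ∃ j, t0 j = x := fun x =>
      (Set.ext_iff.1 (Finset.range_orderEmbOfFin Sᶜ hc) x).symm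
    obtain ⟨c, hc0, hc'⟩ := sv_coeff S t0 t0.strictMono (by
      intro x; rw [← Finset.mem_compl]; exact hr x)
    have h1 : dOp (r + k) f (superVandermonde (r + k) r (fun _ => 0) S) = 0 := by
      rw [← diffOp_eq]; exact congrFun h S
    rw [hc', map_smul, smul_eq_zero] at h1
    have h2 := h1.resolve_left hc0
    have h3 : ∀ j, ∃ j', t0 j' = t j := by
      intro j; rw [← hr, hSc]; simp
    choose g hg using h3
    have hinj : Function.Injective g := by
      intro a b hab
      have := hg a
      rw [hab, hg b] at this
      exact (ht this).symm
    have h4 : t = t0 ∘ (Equiv.ofBijective g (Finite.injective_iff_bijective.1 hinj)) := by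
      funext j; exact (hg j).symm
    rw [h4, vand_perm]
    rcases Int.units_eq_one_or (Equiv.Perm.sign
      (Equiv.ofBijective g (Finite.injective_iff_bijective.1 hinj))) with hs | hs <;> rw [hs]
    · simpa using h2
    · simpa using h2

/-- Proposition 4.3: for positive `r < n`, `k = n - r`, and `a = (0, …, 0)`
of length `r`, the hook Tanisaki ideal `I_λ` for `λ = (r+1, 1, …, 1)` equals the annihilator
of `Δ_n(a)` in `ℚ[x_1, …, x_n]`. -/
theorem tanisakiHook_eq_annihilator (n r : ℕ) (hr : 0 < r) (hrn : r < n) :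
    (tanisakiHook n (n - r) : Set (MvPolynomial (Fin n) ℚ)) =
      {f : MvPolynomial (Fin n) ℚ |
        pAct f (superVandermonde n r (fun _ => 0)) = 0} := by
  obtain ⟨k, rfl⟩ := Nat.exists_eq_add_of_lt hrn
  rw [show r + k + 1 - r = k + 1 by omega, tanisaki_eq (r + k + 1) (k + 1) (by omega) (by omega)]
  ext f
  exact mem_annU_univ (r := r) (k := k + 1) f
end

section
/- Let 0 ≤ r ≤ n, let a = (a_1,…,a_r) be a sequence of nonnegative integers, set k = n−r and s = a_1+⋯+a_r+k(k−1)/2. Let W_n(a)_{i,j} denote the bihomogeneous component of W_n(a) of x-degree i and θ-degree j. Then for any 0 ≤ i ≤ s and 0 ≤ j ≤ r, the bilinear pairing W_n(a)_{i,j} × W_n(a)_{s−i,r−j} → ℚ sending (f,g) to the constant ∂(fg)(Δ_n(a)) is a perfect pairing (nondegenerate in each argument); in particular dim W_n(a)_{i,j} = dim W_n(a)_{s−i,r−j}, and the top component W_n(a)_{s,r} is one-dimensional. -/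
open MvPolynomial

/-- The bidegree `(i,j)` component of `W_n(a)`. -/
noncomputable def Wcomp (n r : ℕ) (a : Fin r → ℕ) (i j : ℕ) : Submodule ℚ (Superspace n) :=
  Wspace n r a ⊓ xHomogSub n i ⊓ thetaHomogSub n j

/-- The duality pairing `(f, g) ↦ ∂(fg)(Δ_n(a))` (a constant, recorded as a rational). -/
noncomputable def dualityPairing (n r : ℕ) (a : Fin r → ℕ) (f g : Superspace n) : ℚ :=
  MvPolynomial.constantCoeff (superAct (superMul f g) (superVandermonde n r a) ∅)


section PoincareAux

/-- Coefficient of the term of `∂(x^a)(x^b)`. -/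
theorem diffOp_eq_of_subset {n : ℕ} (p q : MvPolynomial (Fin n) ℚ) (A B : Finset (Fin n →₀ ℕ))
    (hA : p.support ⊆ A) (hB : q.support ⊆ B) :
    diffOp p q = ∑ a ∈ A, ∑ b ∈ B,
    (p.coeff a * q.coeff b * ∏ i : Fin n, ((b i).descFactorial (a i) : ℚ)) •
      MvPolynomial.monomial (b - a) (1 : ℚ) := by
  unfold diffOp
  rw [Finset.sum_subset hA]
  · refine Finset.sum_congr rfl fun a _ => ?_
    refine Finset.sum_subset hB fun b _ hb => ?_
    rw [MvPolynomial.notMem_support_iff.1 hb]; simp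
  · intro a _ ha
    rw [MvPolynomial.notMem_support_iff.1 ha]; simp

theorem diffOp_add_left {n : ℕ} (p p' q : MvPolynomial (Fin n) ℚ) :
    diffOp (p + p') q = diffOp p q + diffOp p' q := by
  classical
  rw [diffOp_eq_of_subset (p + p') q (p.support ∪ p'.support) q.support
      MvPolynomial.support_add subset_rfl,
    diffOp_eq_of_subset p q (p.support ∪ p'.support) q.support Finset.subset_union_left subset_rfl,
    diffOp_eq_of_subset p' q (p.support ∪ p'.support) q.support Finset.subset_union_right
      subset_rfl, ← Finset.sum_add_distrib]
  refine Finset.sum_congr rfl fun a _ => ?_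
  rw [← Finset.sum_add_distrib]
  refine Finset.sum_congr rfl fun b _ => ?_
  rw [MvPolynomial.coeff_add, ← add_smul]; congr 1; ring

theorem diffOp_add_right {n : ℕ} (p q q' : MvPolynomial (Fin n) ℚ) :
    diffOp p (q + q') = diffOp p q + diffOp p q' := by
  classical
  rw [diffOp_eq_of_subset p (q + q') p.support (q.support ∪ q'.support)
      subset_rfl MvPolynomial.support_add,
    diffOp_eq_of_subset p q p.support (q.support ∪ q'.support) subset_rfl Finset.subset_union_left,
    diffOp_eq_of_subset p q' p.support (q.support ∪ q'.support) subset_rfl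
      Finset.subset_union_right, ← Finset.sum_add_distrib]
  refine Finset.sum_congr rfl fun a _ => ?_
  rw [← Finset.sum_add_distrib]
  refine Finset.sum_congr rfl fun b _ => ?_
  rw [MvPolynomial.coeff_add, ← add_smul]; congr 1; ring

theorem diffOp_smul_left {n : ℕ} (c : ℚ) (p q : MvPolynomial (Fin n) ℚ) :
    diffOp (c • p) q = c • diffOp p q := by
  rw [diffOp_eq_of_subset (c • p) q p.support q.support
      MvPolynomial.support_smul subset_rfl]
  unfold diffOp
  simp only [Finset.smul_sum, smul_smul, MvPolynomial.coeff_smul, smul_eq_mul, mul_assoc]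

theorem diffOp_smul_right {n : ℕ} (c : ℚ) (p q : MvPolynomial (Fin n) ℚ) :
    diffOp p (c • q) = c • diffOp p q := by
  rw [diffOp_eq_of_subset p (c • q) p.support q.support
      subset_rfl MvPolynomial.support_smul]
  unfold diffOp
  simp only [Finset.smul_sum, smul_smul, MvPolynomial.coeff_smul, smul_eq_mul]
  refine Finset.sum_congr rfl fun a _ => Finset.sum_congr rfl fun b _ => ?_
  congr 1; ring

/-- `diffOp` as a bilinear map. -/
noncomputable def diffL (n : ℕ) :
    MvPolynomial (Fin n) ℚ →ₗ[ℚ] MvPolynomial (Fin n) ℚ →ₗ[ℚ] MvPolynomial (Fin n) ℚ :=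
  LinearMap.mk₂ ℚ diffOp diffOp_add_left diffOp_smul_left diffOp_add_right diffOp_smul_right

theorem diffL_apply {n : ℕ} (p q : MvPolynomial (Fin n) ℚ) : diffL n p q = diffOp p q := rfl

theorem diffOp_zero_left {n : ℕ} (q : MvPolynomial (Fin n) ℚ) : diffOp 0 q = 0 := by
  rw [← diffL_apply]; simp

theorem diffOp_zero_right {n : ℕ} (q : MvPolynomial (Fin n) ℚ) : diffOp q 0 = 0 := by
  rw [← diffL_apply]; simp

theorem diffOp_sum_left {n : ℕ} {ι : Type*} (s : Finset ι) (p : ι → MvPolynomial (Fin n) ℚ)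
    (q : MvPolynomial (Fin n) ℚ) : diffOp (∑ i ∈ s, p i) q = ∑ i ∈ s, diffOp (p i) q := by
  simp only [← diffL_apply, map_sum, LinearMap.sum_apply]

theorem diffOp_sum_right {n : ℕ} {ι : Type*} (s : Finset ι) (p : ι → MvPolynomial (Fin n) ℚ)
    (q : MvPolynomial (Fin n) ℚ) : diffOp q (∑ i ∈ s, p i) = ∑ i ∈ s, diffOp q (p i) := by
  simp only [← diffL_apply, map_sum]

theorem diffOp_monomial {n : ℕ} (a b : Fin n →₀ ℕ) (c d : ℚ) :
    diffOp (monomial a c) (monomial b d) =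
      (c * d * ∏ i : Fin n, ((b i).descFactorial (a i) : ℚ)) • monomial (b - a) (1 : ℚ) := by
  rw [diffOp_eq_of_subset _ _ {a} {b} MvPolynomial.support_monomial_subset
    MvPolynomial.support_monomial_subset]
  simp

theorem diffOp_mul {n : ℕ} (p q f : MvPolynomial (Fin n) ℚ) :
    diffOp (p * q) f = diffOp p (diffOp q f) := by
  induction p using MvPolynomial.induction_on' with
  | add p p' hp hp' => rw [add_mul, diffOp_add_left, diffOp_add_left, hp, hp']
  | monomial a c =>
    induction q using MvPolynomial.induction_on' with
    | add p p' hp hp' => rw [mul_add, diffOp_add_left, diffOp_add_left, diffOp_add_right, hp, hp']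
    | monomial b d =>
      induction f using MvPolynomial.induction_on' with
      | add p p' hp hp' => simp only [diffOp_add_right, hp, hp']
      | monomial u e =>
        rw [monomial_mul, diffOp_monomial, diffOp_monomial, diffOp_smul_right, diffOp_monomial,
          smul_smul, tsub_tsub, add_comm b a]
        congr 1
        have : (∏ i : Fin n, ((u i).descFactorial ((a + b) i) : ℚ)) =
            (∏ i : Fin n, ((u i).descFactorial (b i) : ℚ)) *
            ∏ i : Fin n, (((u - b) i).descFactorial (a i) : ℚ) := by
          rw [← Finset.prod_mul_distrib]
          refine Finset.prod_congr rfl fun i _ => ?_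
          rw [Finsupp.add_apply, Finsupp.tsub_apply, add_comm (a i), ← Nat.cast_mul]
          congr 1
          rw [mul_comm]
          exact (Nat.descFactorial_mul_descFactorial (n := u i) (k := b i) (m := b i + a i) (by omega)).symm ▸ by simp
        rw [this]; ring

theorem diffOp_one {n : ℕ} (f : MvPolynomial (Fin n) ℚ) : diffOp 1 f = f := by
  induction f using MvPolynomial.induction_on' with
  | add p p' hp hp' => rw [diffOp_add_right, hp, hp']
  | monomial u e =>
    have : (1 : MvPolynomial (Fin n) ℚ) = monomial 0 1 := rfl
    rw [this, diffOp_monomial]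
    simp [MvPolynomial.smul_monomial]

theorem diffOp_X {n : ℕ} (i : Fin n) (f : MvPolynomial (Fin n) ℚ) :
    diffOp (X i) f = pderiv i f := by
  induction f using MvPolynomial.induction_on' with
  | add p p' hp hp' => rw [diffOp_add_right, hp, hp', map_add]
  | monomial u e =>
    rw [X, diffOp_monomial, pderiv_monomial, MvPolynomial.smul_monomial]
    congr 1
    rw [Finset.prod_eq_single i]
    · simp
    · intro j _ hj
      simp [hj.symm]
    · simp

theorem diffOp_isHomogeneous {n : ℕ} (p q : MvPolynomial (Fin n) ℚ) {i s : ℕ}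
    (hp : p.IsHomogeneous i) (hq : q.IsHomogeneous s) : (diffOp p q).IsHomogeneous (s - i) := by
  unfold diffOp
  refine IsHomogeneous.sum _ _ _ fun a ha => IsHomogeneous.sum _ _ _ fun b hb => ?_
  have h1 := hp (MvPolynomial.mem_support_iff.1 ha)
  have h2 := hq (MvPolynomial.mem_support_iff.1 hb)
  by_cases hab : a ≤ b
  · rw [MvPolynomial.smul_monomial]
    refine isHomogeneous_monomial _ ?_
    obtain ⟨c, rfl⟩ := le_iff_exists_add.1 hab
    rw [Finsupp.weight_apply] at h1 h2
    rw [Finsupp.sum_add_index' (by simp) (by simp)] at h2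
    rw [add_tsub_cancel_left]
    simp [Finsupp.degree_eq_sum, Finsupp.sum_fintype] at h1 h2 ⊢
    omega
  · rw [Finsupp.le_def] at hab
    push Not at hab
    obtain ⟨t, ht⟩ := hab
    have : ∏ i : Fin n, ((b i).descFactorial (a i) : ℚ) = 0 :=
      Finset.prod_eq_zero (Finset.mem_univ t) (by
        rw [Nat.descFactorial_eq_zero_iff_lt.2 ht]; simp)
    rw [this, mul_zero, zero_smul]
    exact isHomogeneous_zero _ _ _

theorem constantCoeff_diffOp_self {n : ℕ} (p : MvPolynomial (Fin n) ℚ) :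
    constantCoeff (diffOp p p) =
      ∑ a ∈ p.support, p.coeff a * p.coeff a * ∏ i : Fin n, ((a i).factorial : ℚ) := by
  unfold diffOp
  rw [map_sum]
  refine Finset.sum_congr rfl fun a ha => ?_
  rw [map_sum, Finset.sum_eq_single a]
  · simp [Nat.descFactorial_self]
  · intro b hb hba
    by_cases hab : a ≤ b
    · have : b - a ≠ 0 := fun h => hba (le_antisymm (tsub_eq_zero_iff_le.1 h) hab)
      simp [constantCoeff_eq, coeff_monomial, this]
    · rw [Finsupp.le_def] at hab
      push Not at hab
      obtain ⟨t, ht⟩ := hab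
      have : ∏ i : Fin n, ((b i).descFactorial (a i) : ℚ) = 0 :=
        Finset.prod_eq_zero (Finset.mem_univ t) (by
          rw [Nat.descFactorial_eq_zero_iff_lt.2 ht]; simp)
      rw [this, mul_zero, zero_smul, map_zero]
  · intro h; exact absurd ha h

theorem constantCoeff_diffOp_self_nonneg {n : ℕ} (p : MvPolynomial (Fin n) ℚ) :
    0 ≤ constantCoeff (diffOp p p) := by
  rw [constantCoeff_diffOp_self]
  exact Finset.sum_nonneg fun a _ => mul_nonneg (mul_self_nonneg _)
    (Finset.prod_nonneg fun _ _ => Nat.cast_nonneg _)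

theorem constantCoeff_diffOp_self_pos {n : ℕ} (p : MvPolynomial (Fin n) ℚ) (hp : p ≠ 0) :
    0 < constantCoeff (diffOp p p) := by
  rw [constantCoeff_diffOp_self]
  refine Finset.sum_pos (fun a ha => mul_pos
    (mul_self_pos.2 (MvPolynomial.mem_support_iff.1 ha)) 
    (Finset.prod_pos fun i _ => Nat.cast_pos.2 (Nat.factorial_pos _))) 
    (MvPolynomial.support_nonempty.2 hp)

/-- The sign of shuffling `A` past `B`. -/
def sg {n : ℕ} (A B : Finset (Fin n)) : ℚ := ∏ a ∈ A, ∏ b ∈ B, if b < a then -1 else 1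

/-- The sign of reversing `m` anticommuting letters. -/
def eps (m : ℕ) : ℚ := (-1) ^ (m.choose 2)

theorem sg_eq {n : ℕ} (A B : Finset (Fin n)) :
    ((-1 : ℚ) ^ ((A ×ˢ B).filter (fun p => p.2 < p.1)).card) = sg A B := by
  unfold sg
  rw [← Finset.prod_product', Finset.prod_ite]
  simp

theorem sg_singleton {n : ℕ} (i : Fin n) (S : Finset (Fin n)) :
    ((-1 : ℚ) ^ (S.filter (fun j => j < i)).card) = sg {i} S := by
  unfold sg
  rw [Finset.prod_singleton, Finset.prod_ite]
  simp

theorem sg_union_left {n : ℕ} {A A' : Finset (Fin n)} (B : Finset (Fin n)) (h : Disjoint A A') :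
    sg (A ∪ A') B = sg A B * sg A' B := by
  unfold sg
  rw [Finset.prod_union h]

theorem sg_union_right {n : ℕ} {A A' : Finset (Fin n)} (B : Finset (Fin n)) (h : Disjoint A A') :
    sg B (A ∪ A') = sg B A * sg B A' := by
  unfold sg
  rw [← Finset.prod_mul_distrib]
  exact Finset.prod_congr rfl fun _ _ => Finset.prod_union h

theorem sg_sq {n : ℕ} (A B : Finset (Fin n)) : sg A B * sg A B = 1 := by
  rw [← sg_eq, ← pow_add, ← two_mul, pow_mul]; simp

theorem sg_swap {n : ℕ} {A B : Finset (Fin n)} (h : Disjoint A B) :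
    sg A B * sg B A = (-1) ^ (A.card * B.card) := by
  unfold sg
  rw [Finset.prod_comm (s := B) (t := A), ← Finset.prod_mul_distrib]
  have : ∀ a ∈ A, ((∏ b ∈ B, if b < a then (-1 : ℚ) else 1) * ∏ b ∈ B, if a < b then (-1 : ℚ) else 1)
      = (-1) ^ B.card := by
    intro a ha
    rw [← Finset.prod_mul_distrib, ← Finset.prod_const]
    refine Finset.prod_congr rfl fun b hb => ?_
    have hne : a ≠ b := fun e => Finset.disjoint_left.1 h ha (e ▸ hb)
    rcases lt_or_gt_of_ne hne with h1 | h1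
    · simp [h1, not_lt.2 h1.le]
    · simp [h1, not_lt.2 h1.le]
  rw [Finset.prod_congr rfl this, Finset.prod_const, ← pow_mul, mul_comm]

theorem sg_swap' {n : ℕ} {A B : Finset (Fin n)} (h : Disjoint A B) :
    sg A B = (-1) ^ (A.card * B.card) * sg B A := by
  rw [← sg_swap h, mul_assoc, sg_sq, mul_one]

theorem sg_empty_left {n : ℕ} (A : Finset (Fin n)) : sg ∅ A = 1 := by simp [sg]
theorem sg_empty_right {n : ℕ} (A : Finset (Fin n)) : sg A ∅ = 1 := by simp [sg]

theorem eps_ne {m : ℕ} : eps m ≠ 0 := by unfold eps; simp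

theorem eps_succ (m : ℕ) : eps (m + 1) = (-1) ^ m * eps m := by
  unfold eps
  rw [Nat.choose_succ_succ' m 1, pow_add, Nat.choose_one_right]

theorem eps_add (m k : ℕ) : eps (m + k) = (-1) ^ (m * k) * eps m * eps k := by
  induction k with
  | zero => simp [eps]
  | succ k ih => rw [← add_assoc, eps_succ, eps_succ, ih, mul_add, pow_add, pow_add]; ring

theorem thetaDerivList_sort {n : ℕ} (T : Finset (Fin n)) (G : Superspace n) (S : Finset (Fin n)) :
    thetaDerivList (T.sort (· ≤ ·)) G S =
      if Disjoint S T then (eps T.card * sg T S) • G (S ∪ T) else 0 := by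
  induction T using Finset.induction_on_min generalizing S with
  | empty => simp [thetaDerivList, eps, sg]
  | insert a T ha ih =>
    have haT : a ∉ T := fun h => lt_irrefl _ (ha a h)
    rw [Finset.sort_insert (· ≤ ·) (fun b hb => (ha b hb).le) haT]
    change thetaDeriv a (thetaDerivList (T.sort (· ≤ ·)) G) S = _
    unfold thetaDeriv
    by_cases haS : a ∈ S
    · have : ¬ Disjoint S (insert a T) := fun h =>
        Finset.disjoint_left.1 h haS (Finset.mem_insert_self _ _)
      simp [haS, this]
    · rw [if_neg haS, ih, sg_singleton]
      have e1 : Disjoint (insert a S) T ↔ Disjoint S (insert a T) := by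
        simp [Finset.disjoint_insert_left, Finset.disjoint_insert_right, haS, haT]
      have e2 : insert a S ∪ T = S ∪ insert a T := by
        rw [Finset.insert_union, Finset.union_insert]
      rw [e2]
      by_cases hd : Disjoint S (insert a T)
      · rw [if_pos (e1.2 hd), if_pos hd, smul_smul, Finset.card_insert_of_notMem haT, eps_succ]
        congr 1
        have d1 : Disjoint {a} S := by simpa using haS
        have d2 : Disjoint {a} T := by simpa using haT
        have h3 : sg T {a} = (-1) ^ T.card := by
          have : sg {a} T = 1 := by
            unfold sg
            rw [Finset.prod_singleton]
            exact Finset.prod_eq_one fun b hb => by simp [(ha b hb).le]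
          rw [sg_swap' d2.symm, this]; simp
        rw [Finset.insert_eq, Finset.insert_eq, sg_union_right _ d1, sg_union_left _ d2, h3]
        ring
      · rw [if_neg (fun h => hd (e1.1 h)), if_neg hd, smul_zero]

theorem superAct_apply {n : ℕ} (f g : Superspace n) (S : Finset (Fin n)) :
    superAct f g S = ∑ T : Finset (Fin n),
      if Disjoint S T then (eps T.card * sg T S) • diffOp (f T) (g (S ∪ T)) else 0 := by
  unfold superAct
  rw [Finset.sum_apply]
  refine Finset.sum_congr rfl fun T _ => ?_
  rw [thetaDerivList_sort]
  split_ifs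
  · rw [diffOp_smul_right]
  · rw [diffOp_zero_right]

theorem superMul_apply {n : ℕ} (f g : Superspace n) (S : Finset (Fin n)) :
    superMul f g S = ∑ T ∈ S.powerset, sg T (S \ T) • (f T * g (S \ T)) := by
  unfold superMul
  simp only [sg_eq]

theorem sum_powerset_eq {n : ℕ} {M : Type*} [AddCommMonoid M]
    (F : Finset (Fin n) → Finset (Fin n) → M) :
    ∑ U : Finset (Fin n), ∑ T ∈ U.powerset, F T (U \ T) =
      ∑ T : Finset (Fin n), ∑ T' : Finset (Fin n), if Disjoint T T' then F T T' else 0 := by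
  have : ∀ T : Finset (Fin n), (∑ T' : Finset (Fin n), if Disjoint T T' then F T T' else 0) =
      ∑ T' ∈ Finset.univ.filter (fun T' => Disjoint T T'), F T T' := fun T => by
    rw [Finset.sum_filter]
  simp only [this]
  rw [Finset.sum_sigma', Finset.sum_sigma']
  refine Finset.sum_bij' (fun x _ => ⟨x.2, x.1 \ x.2⟩) (fun x _ => ⟨x.1 ∪ x.2, x.1⟩) ?_ ?_ ?_ ?_ ?_
  · rintro ⟨U, T⟩ h
    simp [Finset.disjoint_sdiff]
  · rintro ⟨T, T'⟩ h
    simp only [Finset.mem_sigma, Finset.mem_univ, Finset.mem_powerset, true_and]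
    exact Finset.subset_union_left
  · rintro ⟨U, T⟩ h
    simp only [Finset.mem_sigma, Finset.mem_univ, Finset.mem_powerset, true_and] at h
    simp [Finset.union_eq_right.2 h]
  · rintro ⟨T, T'⟩ h
    simp only [Finset.mem_sigma, Finset.mem_univ, Finset.mem_filter, true_and] at h
    simp [Finset.union_sdiff_cancel_left h]
  · rintro ⟨U, T⟩ h
    rfl

theorem superAct_superMul {n : ℕ} (f g h : Superspace n) :
    superAct (superMul f g) h = superAct f (superAct g h) := by
  funext S
  have h1 : superAct (superMul f g) h S = ∑ U : Finset (Fin n), ∑ T ∈ U.powerset,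
      (fun T T' => if Disjoint S (T ∪ T') then
        (eps (T ∪ T').card * sg (T ∪ T') S * sg T T') •
          diffOp (f T) (diffOp (g T') (h (S ∪ (T ∪ T')))) else 0) T (U \ T) := by
    rw [superAct_apply]
    refine Finset.sum_congr rfl fun U _ => ?_
    split_ifs with hd
    · rw [superMul_apply, diffOp_sum_left, Finset.smul_sum]
      refine Finset.sum_congr rfl fun T hT => ?_
      have : T ∪ U \ T = U := Finset.union_sdiff_of_subset (Finset.mem_powerset.1 hT)
      simp only [this, if_pos hd]
      rw [diffOp_smul_left, smul_smul, diffOp_mul]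
    · symm
      refine Finset.sum_eq_zero fun T hT => ?_
      have : T ∪ U \ T = U := Finset.union_sdiff_of_subset (Finset.mem_powerset.1 hT)
      simp only [this, if_neg hd]
  refine h1.trans ((sum_powerset_eq (fun T T' => if Disjoint S (T ∪ T') then
        (eps (T ∪ T').card * sg (T ∪ T') S * sg T T') •
          diffOp (f T) (diffOp (g T') (h (S ∪ (T ∪ T')))) else 0)).trans ?_)
  rw [superAct_apply]
  refine Finset.sum_congr rfl fun T _ => ?_
  split_ifs with hd
  · rw [superAct_apply, diffOp_sum_right, Finset.smul_sum]
    refine Finset.sum_congr rfl fun T' _ => ?_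
    by_cases hTT : Disjoint T T'
    · rw [if_pos hTT]
      by_cases hS : Disjoint S T'
      · rw [if_pos (Finset.disjoint_union_right.2 ⟨hd, hS⟩),
          if_pos (Finset.disjoint_union_left.2 ⟨hS, hTT⟩), diffOp_smul_right, smul_smul,
          Finset.union_assoc, Finset.card_union_of_disjoint hTT, eps_add, sg_union_left _ hTT,
          sg_union_right _ hd, sg_swap' hTT.symm, mul_comm T'.card]
        congr 1
        ring
      · rw [if_neg (fun h => hS (Finset.disjoint_union_right.1 h).2),
          if_neg (fun h => hS (Finset.disjoint_union_left.1 h).1), diffOp_zero_right, smul_zero]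
    · rw [if_neg hTT, if_neg (fun h => hTT (Finset.disjoint_union_left.1 h).2), diffOp_zero_right,
        smul_zero]
  · refine Finset.sum_eq_zero fun T' _ => ?_
    rw [if_neg (fun h => hd (Finset.disjoint_union_right.1 h).1), ite_self]

/-- The sign twist of a superpolynomial. -/
noncomputable def twist {n : ℕ} (j : ℕ) (h : Superspace n) : Superspace n :=
  fun T => ((-1 : ℚ) ^ (j * T.card)) • h T

theorem superMul_comm_twist {n : ℕ} (j : ℕ) (f h : Superspace n) (hf : f ∈ thetaHomogSub n j) :
    superMul f h = superMul (twist j h) f := by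
  funext S
  rw [superMul_apply, superMul_apply]
  refine Finset.sum_bij' (fun T _ => S \ T) (fun T _ => S \ T) ?_ ?_ ?_ ?_ ?_
  · intro T _; simp
  · intro T _; simp
  · intro T hT; exact Finset.sdiff_sdiff_eq_self (Finset.mem_powerset.1 hT)
  · intro T hT; exact Finset.sdiff_sdiff_eq_self (Finset.mem_powerset.1 hT)
  · intro T hT
    simp only [Finset.sdiff_sdiff_eq_self (Finset.mem_powerset.1 hT)]
    by_cases hc : T.card = j
    · unfold twist
      rw [smul_mul_assoc, smul_smul, sg_swap' (Finset.disjoint_sdiff (s := T) (t := S)), hc,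
        mul_comm (f T), mul_comm (sg _ _)]
    · rw [hf T hc]; simp

theorem superAct_add_left {n : ℕ} (f f' g : Superspace n) :
    superAct (f + f') g = superAct f g + superAct f' g := by
  unfold superAct
  rw [← Finset.sum_add_distrib]
  refine Finset.sum_congr rfl fun T _ => ?_
  funext S
  simp [diffOp_add_left]

theorem superAct_smul_left {n : ℕ} (c : ℚ) (f g : Superspace n) :
    superAct (c • f) g = c • superAct f g := by
  unfold superAct
  rw [Finset.smul_sum]
  refine Finset.sum_congr rfl fun T _ => ?_
  funext S
  simp [diffOp_smul_left]

theorem superAct_zero_right {n : ℕ} (f : Superspace n) : superAct f 0 = 0 := by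
  funext S
  rw [superAct_apply]
  simp [diffOp_zero_right]

theorem constantCoeff_superAct_self {n j : ℕ} (f : Superspace n) (hf : f ∈ thetaHomogSub n j)
    (hf0 : f ≠ 0) : constantCoeff (superAct f f ∅) ≠ 0 := by
  have : constantCoeff (superAct f f ∅) =
      eps j * ∑ T : Finset (Fin n), constantCoeff (diffOp (f T) (f T)) := by
    rw [superAct_apply, map_sum, Finset.mul_sum]
    refine Finset.sum_congr rfl fun T _ => ?_
    rw [if_pos (Finset.disjoint_empty_left _), sg_empty_right, Finset.empty_union]
    by_cases hc : T.card = j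
    · rw [hc]; simp [constantCoeff_eq]
    · rw [hf T hc, diffOp_zero_left]; simp
  rw [this]
  refine mul_ne_zero eps_ne (ne_of_gt ?_)
  obtain ⟨T, hT⟩ := Function.ne_iff.1 hf0
  exact Finset.sum_pos' (fun _ _ => constantCoeff_diffOp_self_nonneg _)
    ⟨T, Finset.mem_univ _, constantCoeff_diffOp_self_pos _ hT⟩

theorem xDeriv_eq_superAct {n : ℕ} (i : Fin n) (G : Superspace n) :
    xDeriv i G = superAct (fun T => if T = ∅ then X i else 0) G := by
  funext S
  rw [superAct_apply, Finset.sum_eq_single ∅]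
  · simp [eps, sg, diffOp_X, xDeriv]
  · intro T _ hT
    simp [hT, diffOp_zero_left]
  · simp

theorem one_superAct {n : ℕ} (G : Superspace n) :
    superAct (fun T => if T = ∅ then 1 else 0) G = G := by
  funext S
  rw [superAct_apply, Finset.sum_eq_single ∅]
  · simp [eps, sg, diffOp_one]
  · intro T _ hT
    simp [hT, diffOp_zero_left]
  · simp

theorem thetaDeriv_eq_superAct {n : ℕ} (i : Fin n) (G : Superspace n) :
    thetaDeriv i G = superAct (fun T => if T = {i} then 1 else 0) G := by
  funext S
  rw [superAct_apply, Finset.sum_eq_single {i}]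
  · simp only [thetaDeriv, sg_singleton]
    by_cases h : i ∈ S
    · simp [h]
    · simp [h, eps, diffOp_one, Finset.union_singleton]
  · intro T _ hT
    simp [hT, diffOp_zero_left]
  · simp

theorem superAct_mem_thetaHomogSub {n i r : ℕ} {f G : Superspace n} (hi : i ≤ r)
    (hf : f ∈ thetaHomogSub n i) (hG : G ∈ thetaHomogSub n r) :
    superAct f G ∈ thetaHomogSub n (r - i) := by
  intro S hS
  rw [superAct_apply]
  refine Finset.sum_eq_zero fun T _ => ?_
  split_ifs with hd
  · by_cases hT : T.card = i
    · rw [hG (S ∪ T) (by rw [Finset.card_union_of_disjoint hd]; omega), diffOp_zero_right,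
        smul_zero]
    · rw [hf T hT, diffOp_zero_left, smul_zero]
  · rfl

theorem superAct_mem_xHomogSub {n i s : ℕ} {f G : Superspace n}
    (hf : f ∈ xHomogSub n i) (hG : G ∈ xHomogSub n s) :
    superAct f G ∈ xHomogSub n (s - i) := by
  rw [xHomogSub, Submodule.mem_pi] at *
  intro S _
  rw [superAct_apply]
  refine Submodule.sum_mem _ fun T _ => ?_
  split_ifs with hd
  · exact Submodule.smul_mem _ _ (diffOp_isHomogeneous _ _ (hf T trivial) (hG _ trivial))
  · exact Submodule.zero_mem _

/-- The exponent of the monomial defining the superspace Vandermonde. -/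
noncomputable def vExp (n r : ℕ) (a : Fin r → ℕ) : Fin n →₀ ℕ :=
  Finsupp.equivFunOnFinite.symm
    (fun i : Fin n => if h : (i : ℕ) < r then a ⟨(i : ℕ), h⟩ else n - 1 - (i : ℕ))

/-- The theta-support of the monomial defining the superspace Vandermonde. -/
def vSet (n r : ℕ) : Finset (Fin n) := Finset.univ.filter (fun i : Fin n => (i : ℕ) < r)

theorem superVandermonde_eq (n r : ℕ) (a : Fin r → ℕ) : superVandermonde n r a =
    ∑ w : Equiv.Perm (Fin n), ((Equiv.Perm.sign w : ℤ) : ℚ) •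
      permAct w (sMono (vExp n r a) (vSet n r)) := rfl

theorem vSet_card (n r : ℕ) (h : r ≤ n) : (vSet n r).card = r := by
  obtain ⟨k, rfl⟩ := Nat.exists_eq_add_of_le h
  have : vSet (r + k) r = Finset.univ.map (Fin.castAddEmb k) := by
    ext i
    simp only [vSet, Finset.mem_filter, Finset.mem_univ, true_and, Finset.mem_map]
    constructor
    · intro hi; exact ⟨⟨i, hi⟩, by ext; rfl⟩
    · rintro ⟨x, rfl⟩; simp
  rw [this]; simp

theorem vExp_sum (n r : ℕ) (h : r ≤ n) (a : Fin r → ℕ) :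
    ∑ i : Fin n, vExp n r a i = (∑ t : Fin r, a t) + Nat.choose (n - r) 2 := by
  obtain ⟨k, rfl⟩ := Nat.exists_eq_add_of_le h
  rw [Fin.sum_univ_add]
  congr 1
  · refine Finset.sum_congr rfl fun i _ => ?_
    simp [vExp]
  · rw [Nat.add_sub_cancel_left, Nat.choose_two_right, ← Finset.sum_range_id,
      ← Finset.sum_range_reflect (fun x => x) k, Finset.sum_range]
    refine Finset.sum_congr rfl fun i _ => ?_
    simp only [vExp, Finsupp.equivFunOnFinite_symm_apply_apply, Fin.val_natAdd]
    rw [dif_neg (by omega)]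
    omega

theorem superVandermonde_mem_theta (n r : ℕ) (h : r ≤ n) (a : Fin r → ℕ) :
    superVandermonde n r a ∈ thetaHomogSub n r := by
  rw [superVandermonde_eq]
  refine Submodule.sum_mem _ fun w _ => Submodule.smul_mem _ _ ?_
  intro S hS
  unfold permAct sMono
  rw [if_neg, map_zero, smul_zero]
  intro h1
  apply hS
  rw [← vSet_card n r h, ← h1, Finset.card_image_of_injective _ w.symm.injective]

theorem superVandermonde_mem_x (n r : ℕ) (h : r ≤ n) (a : Fin r → ℕ) :
    superVandermonde n r a ∈ xHomogSub n ((∑ t : Fin r, a t) + Nat.choose (n - r) 2) := by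
  rw [superVandermonde_eq]
  refine Submodule.sum_mem _ fun w _ => Submodule.smul_mem _ _ ?_
  rw [xHomogSub, Submodule.mem_pi]
  intro S _
  unfold permAct sMono
  refine Submodule.smul_mem _ _ ?_
  rw [mem_homogeneousSubmodule]
  apply IsHomogeneous.rename_isHomogeneous
  split_ifs
  · apply isHomogeneous_monomial
    rw [Finsupp.degree_eq_sum, vExp_sum n r h]
  · exact isHomogeneous_zero _ _ _

theorem sign_eq_inv {n : ℕ} (w : Equiv.Perm (Fin n)) :
    ((Equiv.Perm.sign w : ℤ) : ℚ) = (-1) ^ ((Finset.univ : Finset (Fin n × Fin n)).filter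
      (fun p => p.1 < p.2 ∧ w p.2 < w p.1)).card := by
  rw [Equiv.Perm.sign_eq_prod_prod_Ioi]
  push_cast
  have : ∀ i : Fin n, (∏ j ∈ Finset.Ioi i,
      (((if w i < w j then (1 : ℤˣ) else -1 : ℤˣ) : ℤ) : ℚ)) =
      ∏ j : Fin n, if i < j ∧ w j < w i then (-1 : ℚ) else 1 := by
    intro i
    have : Finset.Ioi i = Finset.univ.filter (fun j => i < j) := by ext; simp
    rw [this, Finset.prod_filter]
    refine Finset.prod_congr rfl fun j _ => ?_
    by_cases hij : i < j
    · have hne : w i ≠ w j := fun e => hij.ne (w.injective e)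
      rcases lt_or_gt_of_ne hne with h1 | h1
      · simp [hij, h1, not_lt.2 h1.le]
      · simp [hij, h1, not_lt.2 h1.le]
    · simp [hij]
  simp only [this]
  rw [← Finset.prod_product', Finset.prod_ite]
  simp

theorem superVandermonde_ne_zero (n r : ℕ) (a : Fin r → ℕ) :
    superVandermonde n r a ≠ 0 := by
  intro h0
  have h1 := congrArg (fun F => MvPolynomial.coeff (vExp n r a) (F (vSet n r))) h0
  simp only [superVandermonde_eq, Finset.sum_apply, Pi.smul_apply, Pi.zero_apply,
    MvPolynomial.coeff_zero, MvPolynomial.coeff_sum, MvPolynomial.coeff_smul] at h1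
  refine absurd h1 (ne_of_gt ?_)
  have key : ∀ w : Equiv.Perm (Fin n), (vSet n r).image w.symm = vSet n r →
      Finsupp.mapDomain w (vExp n r a) = vExp n r a →
      ((Equiv.Perm.sign w : ℤ) : ℚ) * ((-1 : ℚ) ^ (((vSet n r) ×ˢ (vSet n r)).filter
        (fun p => p.1 < p.2 ∧ w p.2 < w p.1)).card) = 1 := by
    intro w hw he
    have hS : ∀ i, (w i : ℕ) < r ↔ (i : ℕ) < r := by
      intro i
      have : i ∈ (vSet n r).image w.symm ↔ w i ∈ vSet n r := by
        constructor
        · intro h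
          obtain ⟨y, hy, rfl⟩ := Finset.mem_image.1 h
          simpa using hy
        · intro h; exact Finset.mem_image.2 ⟨w i, h, by simp⟩
      rw [hw] at this
      simpa [vSet] using this.symm
    have hfix : ∀ i : Fin n, ¬ (i : ℕ) < r → w i = i := by
      intro i hi
      have h2 : vExp n r a (w i) = vExp n r a i := by
        conv_lhs => rw [← he]
        exact Finsupp.mapDomain_apply w.injective _ _
      have h3 : ¬ (w i : ℕ) < r := fun h => hi ((hS i).1 h)
      simp only [vExp, Finsupp.equivFunOnFinite_symm_apply_apply, dif_neg hi, dif_neg h3] at h2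
      have := i.2
      have := (w i).2
      ext; omega
    have : ((vSet n r) ×ˢ (vSet n r)).filter (fun p => p.1 < p.2 ∧ w p.2 < w p.1) =
        (Finset.univ : Finset (Fin n × Fin n)).filter (fun p => p.1 < p.2 ∧ w p.2 < w p.1) := by
      ext ⟨p, q⟩
      simp only [Finset.mem_filter, Finset.mem_product, Finset.mem_univ, true_and, vSet,
        and_iff_right_iff_imp]
      rintro ⟨h2, h3⟩
      have hp := hS p
      have hq := hS q
      by_cases hq' : (q : ℕ) < r
      · exact ⟨lt_trans h2 hq', hq'⟩
      · exfalso
        have e1 := hfix q hq'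
        rw [Fin.lt_def] at h2 h3
        rw [e1] at h3
        by_cases hp' : (p : ℕ) < r
        · have := hp.2 hp'; omega
        · rw [hfix p hp'] at h3; omega
    rw [this, sign_eq_inv, ← pow_add, ← two_mul, pow_mul]; simp
  have val : ∀ w : Equiv.Perm (Fin n), (((Equiv.Perm.sign w : ℤ) : ℚ) •
      MvPolynomial.coeff (vExp n r a) (permAct w (sMono (vExp n r a) (vSet n r)) (vSet n r))) =
      if (vSet n r).image w.symm = vSet n r ∧ Finsupp.mapDomain w (vExp n r a) = vExp n r a
        then 1 else 0 := by
    intro w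
    unfold permAct sMono
    by_cases hw : (vSet n r).image w.symm = vSet n r
    · rw [if_pos hw, rename_monomial, coeff_smul, coeff_monomial, hw]
      by_cases he : Finsupp.mapDomain w (vExp n r a) = vExp n r a
      · rw [if_pos he, if_pos ⟨rfl, he⟩, smul_eq_mul, smul_eq_mul, mul_one, key w hw he]
      · rw [if_neg he, if_neg (fun h => he h.2), smul_zero, smul_zero]
    · rw [if_neg hw, if_neg (fun h => hw h.1)]; simp
  simp only [val]
  refine Finset.sum_pos' (fun w _ => by split_ifs <;> norm_num) ⟨1, Finset.mem_univ _, ?_⟩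
  rw [if_pos]
  · norm_num
  · constructor
    · change Finset.image (fun x => x) (vSet n r) = vSet n r
      exact Finset.image_id'
    · exact Finsupp.mapDomain_id

theorem superVandermonde_mem_W (n r : ℕ) (a : Fin r → ℕ) :
    superVandermonde n r a ∈ Wspace n r a := by
  unfold Wspace
  rw [Submodule.mem_sInf]
  exact fun W hW => hW.1

theorem xDeriv_mem_W {n r : ℕ} {a : Fin r → ℕ} {F : Superspace n} (i : Fin n)
    (hF : F ∈ Wspace n r a) : xDeriv i F ∈ Wspace n r a := by
  unfold Wspace at *
  rw [Submodule.mem_sInf] at *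
  exact fun W hW => hW.2.1 i F (hF W hW)

theorem thetaDeriv_mem_W {n r : ℕ} {a : Fin r → ℕ} {F : Superspace n} (i : Fin n)
    (hF : F ∈ Wspace n r a) : thetaDeriv i F ∈ Wspace n r a := by
  unfold Wspace at *
  rw [Submodule.mem_sInf] at *
  exact fun W hW => hW.2.2 i F (hF W hW)

theorem thetaDerivList_mem_W {n r : ℕ} {a : Fin r → ℕ} {F : Superspace n} (l : List (Fin n))
    (hF : F ∈ Wspace n r a) : thetaDerivList l F ∈ Wspace n r a := by
  induction l with
  | nil => exact hF
  | cons i l ih => exact thetaDeriv_mem_W i ih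

theorem pAct_mem_W {n r : ℕ} {a : Fin r → ℕ} (p : MvPolynomial (Fin n) ℚ) {F : Superspace n}
    (hF : F ∈ Wspace n r a) : pAct p F ∈ Wspace n r a := by
  induction p using MvPolynomial.induction_on generalizing F with
  | C c =>
    have : pAct (C c) F = c • F := by
      funext S
      simp only [pAct, Pi.smul_apply]
      rw [show (C c : MvPolynomial (Fin n) ℚ) = c • 1 by rw [MvPolynomial.smul_eq_C_mul, mul_one],
        diffOp_smul_left, diffOp_one]
    rw [this]
    exact Submodule.smul_mem _ _ hF
  | add p q hp hq =>
    have : pAct (p + q) F = pAct p F + pAct q F := by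
      funext S
      simp only [pAct, Pi.add_apply, diffOp_add_left]
    rw [this]
    exact Submodule.add_mem _ (hp hF) (hq hF)
  | mul_X p i hp =>
    have : pAct (p * X i) F = pAct p (xDeriv i F) := by
      funext S
      simp only [pAct, xDeriv, diffOp_mul, diffOp_X]
    rw [this]
    exact hp (xDeriv_mem_W i hF)

theorem superAct_mem_W {n r : ℕ} {a : Fin r → ℕ} (f : Superspace n) {F : Superspace n}
    (hF : F ∈ Wspace n r a) : superAct f F ∈ Wspace n r a := by
  unfold superAct
  exact Submodule.sum_mem _ fun T _ => pAct_mem_W (f T) (thetaDerivList_mem_W _ hF)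

/-- The linear map `h ↦ ∂(h)(Δ)`. -/
noncomputable def actL (n r : ℕ) (a : Fin r → ℕ) : Superspace n →ₗ[ℚ] Superspace n where
  toFun h := superAct h (superVandermonde n r a)
  map_add' f g := superAct_add_left f g _
  map_smul' c f := superAct_smul_left c f _

theorem exists_of_mem_W {n r : ℕ} {a : Fin r → ℕ} {F : Superspace n} (hF : F ∈ Wspace n r a) :
    ∃ h, superAct h (superVandermonde n r a) = F := by
  unfold Wspace at hF
  rw [Submodule.mem_sInf] at hF
  refine hF (LinearMap.range (actL n r a)) ⟨⟨fun T => if T = ∅ then 1 else 0, one_superAct (superVandermonde n r a)⟩, ?_, ?_⟩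
  · rintro i _ ⟨h, rfl⟩
    exact ⟨_, (superAct_superMul _ h _).trans (xDeriv_eq_superAct i _).symm⟩
  · rintro i _ ⟨h, rfl⟩
    exact ⟨_, (superAct_superMul _ h _).trans (thetaDeriv_eq_superAct i _).symm⟩

theorem actL_mem {n r : ℕ} (hrn : r ≤ n) {a : Fin r → ℕ} {i j : ℕ} (hj : j ≤ r)
    {f : Superspace n} (hf : f ∈ Wcomp n r a i j) :
    superAct f (superVandermonde n r a) ∈
      Wcomp n r a ((∑ t : Fin r, a t) + Nat.choose (n - r) 2 - i) (r - j) :=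
  ⟨⟨superAct_mem_W f (superVandermonde_mem_W n r a),
    superAct_mem_xHomogSub hf.1.2 (superVandermonde_mem_x n r hrn a)⟩,
    superAct_mem_thetaHomogSub hj hf.2 (superVandermonde_mem_theta n r hrn a)⟩

theorem actL_eq_zero {n r : ℕ} {a : Fin r → ℕ} {i j : ℕ}
    {f : Superspace n} (hf : f ∈ Wcomp n r a i j)
    (h0 : superAct f (superVandermonde n r a) = 0) : f = 0 := by
  by_contra hne
  obtain ⟨h, hh⟩ := exists_of_mem_W hf.1.1
  apply constantCoeff_superAct_self f hf.2 hne
  have : superAct f f = 0 := by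
    conv_lhs => rw [← hh]
    rw [hh, ← hh, ← superAct_superMul, hh, superMul_comm_twist j f h hf.2, superAct_superMul, h0,
      superAct_zero_right]
  rw [this]; simp

theorem twist_eq {n : ℕ} (j m : ℕ) (g : Superspace n) (hg : g ∈ thetaHomogSub n m) :
    twist j g = ((-1 : ℚ) ^ (j * m)) • g := by
  funext T
  unfold twist
  by_cases hT : T.card = m
  · rw [hT]; rfl
  · rw [Pi.smul_apply, hg T hT]; simp

theorem rank_le_aux {n r : ℕ} (hrn : r ≤ n) (a : Fin r → ℕ) (i j : ℕ) (hj : j ≤ r) :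
    Module.rank ℚ (↥(Wcomp n r a i j)) ≤ Module.rank ℚ
      (↥(Wcomp n r a ((∑ t : Fin r, a t) + Nat.choose (n - r) 2 - i) (r - j))) := by
  refine LinearMap.rank_le_of_injective
    ((actL n r a).restrict (fun f hf => actL_mem hrn hj hf)) ?_
  rw [injective_iff_map_eq_zero]
  rintro ⟨f, hf⟩ h
  have h' : superAct f (superVandermonde n r a) = 0 := congrArg Subtype.val h
  exact Subtype.ext (actL_eq_zero hf h')

theorem rank_W00_le (n r : ℕ) (a : Fin r → ℕ) : Module.rank ℚ (↥(Wcomp n r a 0 0)) ≤ 1 := by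
  let one : Superspace n := fun T => if T = ∅ then 1 else 0
  have hle : Wcomp n r a 0 0 ≤ Submodule.span ℚ {one} := by
    intro f hf
    have hx : (f ∅).IsHomogeneous 0 := by
      have := hf.1.2
      rw [xHomogSub, SetLike.mem_coe, Submodule.mem_pi] at this
      exact this ∅ trivial
    obtain ⟨c, hc⟩ : ∃ c, f ∅ = C c := ⟨_, (totalDegree_eq_zero_iff_eq_C.1
      (Nat.le_zero.1 hx.totalDegree_le))⟩
    rw [Submodule.mem_span_singleton]
    refine ⟨c, ?_⟩
    funext T
    by_cases hT : T = ∅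
    · subst hT
      simp [one, hc, MvPolynomial.smul_eq_C_mul]
    · rw [hf.2 T (by simpa using hT)]
      simp [one, hT]
  exact (Submodule.rank_mono hle).trans ((rank_span_le _).trans (by simp))

end PoincareAux

/-- Corollary 5.8: with `s = a_1 + ⋯ + a_r + C(k,2)`, `k = n - r`,
for `0 ≤ i ≤ s` and `0 ≤ j ≤ r` the pairing `W_n(a)_{i,j} × W_n(a)_{s-i,r-j} → ℚ`,
`(f,g) ↦ ∂(fg)(Δ_n(a))`, is perfect (nondegenerate on each side); in particular
`dim W_n(a)_{i,j} = dim W_n(a)_{s-i,r-j}` and the top component `W_n(a)_{s,r}` is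
one-dimensional. -/
theorem Wcomp_poincare_duality (n r : ℕ) (hrn : r ≤ n) (a : Fin r → ℕ) (i j : ℕ)
    (hi : i ≤ (∑ t : Fin r, a t) + Nat.choose (n - r) 2) (hj : j ≤ r) :
    (∀ f ∈ Wcomp n r a i j, f ≠ 0 →
      ∃ g ∈ Wcomp n r a ((∑ t : Fin r, a t) + Nat.choose (n - r) 2 - i) (r - j),
        dualityPairing n r a f g ≠ 0) ∧
    (∀ g ∈ Wcomp n r a ((∑ t : Fin r, a t) + Nat.choose (n - r) 2 - i) (r - j), g ≠ 0 →
      ∃ f ∈ Wcomp n r a i j, dualityPairing n r a f g ≠ 0) ∧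
    Module.rank ℚ (↥(Wcomp n r a i j)) =
      Module.rank ℚ
        (↥(Wcomp n r a ((∑ t : Fin r, a t) + Nat.choose (n - r) 2 - i) (r - j))) ∧
    Module.rank ℚ (↥(Wcomp n r a ((∑ t : Fin r, a t) + Nat.choose (n - r) 2) r)) = 1 := by
  have hB := rank_le_aux hrn a ((∑ t : Fin r, a t) + Nat.choose (n - r) 2 - i) (r - j)
    (Nat.sub_le _ _)
  have hmem : ∀ g ∈ Wcomp n r a ((∑ t : Fin r, a t) + Nat.choose (n - r) 2 - i) (r - j),
      superAct g (superVandermonde n r a) ∈ Wcomp n r a i j := by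
    intro g hg
    have := actL_mem hrn (Nat.sub_le r j) hg
    rwa [Nat.sub_sub_self hi, Nat.sub_sub_self hj] at this
  rw [Nat.sub_sub_self hi, Nat.sub_sub_self hj] at hB
  refine ⟨?_, ?_, le_antisymm (rank_le_aux hrn a i j hj) hB, ?_⟩
  · intro f hf hf0
    have hg := actL_mem hrn hj hf
    refine ⟨_, hg, ?_⟩
    have hg0 : superAct f (superVandermonde n r a) ≠ 0 := fun h => hf0 (actL_eq_zero hf h)
    unfold dualityPairing
    rw [superMul_comm_twist j f _ hf.2, superAct_superMul, twist_eq j _ _ hg.2,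
      superAct_smul_left, Pi.smul_apply, constantCoeff_eq, coeff_smul, ← constantCoeff_eq]
    exact smul_ne_zero (by simp) (constantCoeff_superAct_self _ hg.2 hg0)
  · intro g hg hg0
    refine ⟨_, hmem g hg, ?_⟩
    unfold dualityPairing
    rw [superAct_superMul]
    exact constantCoeff_superAct_self _ (hmem g hg).2 (fun h => hg0 (actL_eq_zero hg h))
  · apply le_antisymm
    · have := rank_le_aux hrn a ((∑ t : Fin r, a t) + Nat.choose (n - r) 2) r le_rfl
      rw [Nat.sub_self, Nat.sub_self] at this
      exact this.trans (rank_W00_le n r a)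
    · rw [Cardinal.one_le_iff_ne_zero, ← pos_iff_ne_zero, rank_pos_iff_exists_ne_zero]
      refine ⟨⟨superVandermonde n r a, ⟨superVandermonde_mem_W n r a,
        superVandermonde_mem_x n r hrn a⟩, superVandermonde_mem_theta n r hrn a⟩, fun h => ?_⟩
      exact superVandermonde_ne_zero n r a (congrArg Subtype.val h)
end
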